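/- For Δ drawn from U(n), the probability that Δ is shellable tends to 0 as n → ∞; i.e., with high probability Δ is not shellable. -/

import Mathlib

open scoped Classical

noncomputable section

/-- `Δ` is a simplicial complex on vertex set `Fin n`: all faces are nonempty
and it is downward closed. -/
def IsComplex {n : ℕ} (Δ : Finset (Finset (Fin n))) : Prop :=
  (∀ x ∈ Δ, x.Nonempty) ∧
    ∀ x ∈ Δ, ∀ y : Finset (Fin n), y.Nonempty → y ⊆ x → y ∈ Δ

/-- The finite set of all simplicial complexes on `n` vertices. -/
def allComplexes (n : ℕ) : Finset (Finset (Finset (Fin n))) :=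
  Finset.univ.filter IsComplex

/-- The probability, under the uniform measure `U(n)` on all simplicial
complexes on `n` vertices, of the event `P`. -/
def uniformProb (n : ℕ) (P : Finset (Finset (Fin n)) → Prop) : ℝ :=
  (((allComplexes n).filter P).card : ℝ) / ((allComplexes n).card : ℝ)

/-- `x` is a facet (maximal face) of `Δ`. -/
def IsFacet {n : ℕ} (Δ : Finset (Finset (Fin n))) (x : Finset (Fin n)) : Prop :=
  x ∈ Δ ∧ ∀ y ∈ Δ, x ⊆ y → y = x

/-- `Δ` is shellable: its facets can be ordered `x_1, …, x_m` so that for all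
`i < j`, if `x_i ∩ x_j ≠ ∅` then there is `l < j` with
`x_i ∩ x_j ⊆ x_l ∩ x_j` and `|x_l ∩ x_j| = |x_j| - 1`. -/
def Shellable {n : ℕ} (Δ : Finset (Finset (Fin n))) : Prop :=
  ∃ (m : ℕ) (x : Fin m → Finset (Fin n)),
    Function.Injective x ∧
    (∀ f : Finset (Fin n), IsFacet Δ f ↔ ∃ i, x i = f) ∧
    ∀ i j : Fin m, i < j → (x i ∩ x j).Nonempty →
      ∃ l : Fin m, l < j ∧ x i ∩ x j ⊆ x l ∩ x j ∧ (x l ∩ x j).card + 1 = (x j).card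

/-!
Adding the empty face identifies complexes with nonempty lower sets of the Boolean lattice, and the
typical such lower set contains almost everything well below the middle and almost nothing well
above it. Call an `s`-set *switchable* if it can be added to a complex `Δ` as a facet whose
intersection with every other `s`-face has at most `s - 2` vertices.

*Switching.* For `n < 2 * s` any two `s`-sets meet, so a shelling can contain at most one such
isolated facet: the later of two would have no codimension-one intersection with an earlier facet.
Hence a complex arises from a shellable one by adding a switchable set in at most `2 * 2 ^ s` ways,
and shellable complexes with at least `B` switchable sets have probability at most `2 * 2 ^ s / B`.

*Containers.* It remains to see that for `s` just above `n / 2` most complexes have far more than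
`2 ^ s` switchable sets. If this fails, then in the complex or in its Alexander dual some layer at
or above the middle has a large shadow with noticeably fewer complete sets. Sapozhenko's graph
containers show that such layers are so few that, given the part of a lower set below some size `j`,
the ways of continuing it with such a layer are outnumbered by those of merely choosing an
arbitrary family of `j`-sets all of whose proper subsets are present.
-/

namespace UniformComplex

open Finset
open scoped FinsetFamily Pointwise

/-! ### Counting and sampling subsets -/

section Sampling

variable {α ι : Type*}

/-- The subsets of `S` with at most `r` elements, for a real bound `r`. -/
def subsetsCardLE (S : Finset α) (r : ℝ) : Finset (Finset α) :=
  {T ∈ S.powerset | (#T : ℝ) ≤ r}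

lemma mem_subsetsCardLE {S T : Finset α} {r : ℝ} :
    T ∈ subsetsCardLE S r ↔ T ⊆ S ∧ (#T : ℝ) ≤ r := by
  simp [subsetsCardLE]

lemma card_subsetsCardLE_mul_rpow_le (S : Finset α) (r : ℝ) {x : ℝ} (hx₀ : 0 < x) (hx₁ : x ≤ 1) :
    #(subsetsCardLE S r) * x ^ r ≤ (x + 1) ^ #S :=
  calc
    #(subsetsCardLE S r) * x ^ r = ∑ _T ∈ subsetsCardLE S r, x ^ r := by
      rw [sum_const, nsmul_eq_mul]
    _ ≤ ∑ T ∈ subsetsCardLE S r, x ^ #T := sum_le_sum fun T hT ↦ by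
      rw [← Real.rpow_natCast]
      exact Real.rpow_le_rpow_of_exponent_ge hx₀ hx₁ (mem_subsetsCardLE.mp hT).2
    _ ≤ ∑ T ∈ S.powerset, x ^ #T :=
      sum_le_sum_of_subset_of_nonneg (filter_subset _ _) fun _ _ _ ↦ by positivity
    _ = (x + 1) ^ #S := by simpa using sum_pow_mul_eq_add_pow x 1 S

lemma exp_le_two_rpow {z : ℝ} (hz : 0 ≤ z) : Real.exp z ≤ (2 : ℝ) ^ (2 * z) := by
  rw [Real.rpow_def_of_pos two_pos]
  have := Real.log_two_gt_d9
  exact Real.exp_le_exp.mpr (by nlinarith)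

lemma card_subsetsCardLE_le (S : Finset α) (r : ℝ) {z : ℝ} {m : ℕ} (h : (#S : ℝ) ≤ z * 2 ^ m) :
    (#(subsetsCardLE S r) : ℝ) ≤ 2 ^ (m * r + 2 * z) := by
  set x : ℝ := (2 ^ m)⁻¹ with hx
  have hz : 0 ≤ z := nonneg_of_mul_nonneg_left ((Nat.cast_nonneg _).trans h) (by positivity)
  have hxr : x ^ r = ((2 : ℝ) ^ (m * r))⁻¹ := by
    rw [hx, Real.inv_rpow (by positivity), ← Real.rpow_natCast, ← Real.rpow_mul two_pos.le]
  have hpow : (x + 1) ^ #S ≤ (2 : ℝ) ^ (2 * z) :=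
    calc
      (x + 1) ^ #S ≤ Real.exp x ^ #S := by gcongr; exact Real.add_one_le_exp x
      _ = Real.exp (#S * x) := by rw [← Real.exp_nat_mul]
      _ ≤ Real.exp z := Real.exp_le_exp.mpr (by rwa [hx, mul_inv_le_iff₀ (by positivity)])
      _ ≤ 2 ^ (2 * z) := exp_le_two_rpow hz
  have hmul := (card_subsetsCardLE_mul_rpow_le S r (by positivity : 0 < x)
    (inv_le_one_of_one_le₀ (one_le_pow₀ one_le_two))).trans hpow
  rw [hxr, mul_inv_le_iff₀ (by positivity)] at hmul
  rwa [Real.rpow_add two_pos, mul_comm]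

variable [DecidableEq α] {G : Finset α} {B : ι → Finset α} {β : ℝ}

lemma sum_card_filter_notMem_le {H : Finset ι} (hB : ∀ h ∈ H, B h ⊆ G ∧ β ≤ #(B h)) :
    ∑ c ∈ G, (#{h ∈ H | c ∉ B h} : ℝ) ≤ #H * (#G - β) := by
  have hswap : ∑ c ∈ G, #{h ∈ H | c ∉ B h} = ∑ h ∈ H, #{c ∈ G | c ∉ B h} :=
    sum_card_bipartiteAbove_eq_sum_card_bipartiteBelow _
  rw [← Nat.cast_sum, hswap, Nat.cast_sum, ← nsmul_eq_mul, ← sum_const]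
  refine sum_le_sum fun h hh ↦ ?_
  rw [filter_notMem_eq_sdiff, card_sdiff_of_subset (hB h hh).1,
    Nat.cast_sub (card_le_card (hB h hh).1)]
  linarith [(hB h hh).2]

lemma exists_mem_weight_add_card_filter_notMem_le (hG : G.Nonempty) {w : α → ℝ} {p q : ℝ}
    (hq : 0 ≤ q) {H : Finset ι} (hB : ∀ h ∈ H, B h ⊆ G ∧ β ≤ #(B h)) :
    ∃ c ∈ G, p * w c + q * #{h ∈ H | c ∉ B h} ≤
      p * ((∑ c ∈ G, w c) / #G) + q * (#H * (1 - β / #G)) := by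
  have hG₀ : (0 : ℝ) < #G := by exact_mod_cast hG.card_pos
  refine exists_le_of_sum_le hG ?_
  calc
    ∑ c ∈ G, (p * w c + q * #{h ∈ H | c ∉ B h}) =
        p * ∑ c ∈ G, w c + q * ∑ c ∈ G, (#{h ∈ H | c ∉ B h} : ℝ) := by
      rw [sum_add_distrib, mul_sum, mul_sum]
    _ ≤ p * ∑ c ∈ G, w c + q * (#H * (#G - β)) := by gcongr; exact sum_card_filter_notMem_le hB
    _ = ∑ _c ∈ G, (p * ((∑ c ∈ G, w c) / #G) + q * (#H * (1 - β / #G))) := by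
      rw [sum_const, nsmul_eq_mul]
      field_simp

-- The method of conditional expectations for `t` independent uniform samples from `G`.
lemma exists_subset_weight_add_unhit_le (hG : G.Nonempty) {w : α → ℝ} (hw : ∀ c, 0 ≤ w c)
    {p q : ℝ} (hp : 0 ≤ p) (hq : 0 ≤ q) (hβ : β ≤ #G) (t : ℕ) (H : Finset ι)
    (hB : ∀ h ∈ H, B h ⊆ G ∧ β ≤ #(B h)) :
    ∃ T ⊆ G, #T ≤ t ∧
      p * ∑ c ∈ T, w c + q * #{h ∈ H | Disjoint T (B h)} ≤
        p * (t * (∑ c ∈ G, w c) / #G) + q * (#H * (1 - β / #G) ^ t) := by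
  induction t generalizing H with
  | zero => exact ⟨∅, by simp, by simp, by simp⟩
  | succ t ih =>
    have hθ : 0 ≤ 1 - β / #G := by
      rw [sub_nonneg]
      exact div_le_one_of_le₀ hβ (Nat.cast_nonneg _)
    obtain ⟨c, hc, hfirst⟩ := exists_mem_weight_add_card_filter_notMem_le hG (w := w) (p := p)
      (mul_nonneg hq (pow_nonneg hθ t)) hB
    obtain ⟨T, hTG, hTt, hrest⟩ := ih {h ∈ H | c ∉ B h} fun h hh ↦ hB h (mem_of_mem_filter h hh)
    refine ⟨insert c T, insert_subset hc hTG, (card_insert_le c T).trans (by omega), ?_⟩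
    have hweight : ∑ x ∈ insert c T, w x ≤ w c + ∑ x ∈ T, w x := by
      by_cases hcT : c ∈ T
      · rw [insert_eq_of_mem hcT]
        linarith [hw c]
      · rw [sum_insert hcT]
    have hunhit : {h ∈ H | Disjoint (insert c T) (B h)} =
        {h ∈ {h ∈ H | c ∉ B h} | Disjoint T (B h)} := by
      ext h
      simp only [disjoint_insert_left, mem_filter, and_assoc]
    have hpw := mul_le_mul_of_nonneg_left hweight hp
    rw [hunhit]
    push_cast
    calc
      _ ≤ (p * w c + q * (1 - β / #G) ^ t * #{h ∈ H | c ∉ B h}) +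
          p * (t * (∑ c ∈ G, w c) / #G) := by linarith
      _ ≤ (p * ((∑ c ∈ G, w c) / #G) + q * (1 - β / #G) ^ t * (#H * (1 - β / #G))) +
          p * (t * (∑ c ∈ G, w c) / #G) := by gcongr
      _ = _ := by ring

lemma exists_subset_weight_le_unhit_le (hG : G.Nonempty) {w : α → ℝ} (hw : ∀ c, 0 ≤ w c)
    (hβ : β ≤ #G) {t : ℕ} {H : Finset ι} (hB : ∀ h ∈ H, B h ⊆ G ∧ β ≤ #(B h)) {X Y : ℝ}
    (hX : 0 < X) (hY : 0 < Y) (hXle : t * (∑ c ∈ G, w c) / #G ≤ X)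
    (hYle : #H * (1 - β / #G) ^ t ≤ Y) :
    ∃ T ⊆ G, #T ≤ t ∧ ∑ c ∈ T, w c ≤ 2 * X ∧
      (#{h ∈ H | Disjoint T (B h)} : ℝ) ≤ 2 * Y := by
  obtain ⟨T, hTG, hTt, hsum⟩ := exists_subset_weight_add_unhit_le hG hw
    (inv_nonneg.mpr hX.le) (inv_nonneg.mpr hY.le) hβ t H hB
  have hX₁ : X⁻¹ * (t * (∑ c ∈ G, w c) / #G) ≤ 1 := inv_mul_le_one_of_le₀ hXle hX.le
  have hY₁ : Y⁻¹ * (#H * (1 - β / #G) ^ t) ≤ 1 := inv_mul_le_one_of_le₀ hYle hY.le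
  have hX₂ : 0 ≤ X⁻¹ * ∑ c ∈ T, w c :=
    mul_nonneg (inv_nonneg.mpr hX.le) (sum_nonneg fun c _ ↦ hw c)
  have hY₂ : 0 ≤ Y⁻¹ * (#{h ∈ H | Disjoint T (B h)} : ℝ) := by positivity
  refine ⟨T, hTG, hTt, ?_, ?_⟩
  · rw [mul_comm, ← inv_mul_le_iff₀ hX]
    linarith
  · rw [mul_comm, ← inv_mul_le_iff₀ hY]
    linarith

end Sampling

/-! ### Shadows, complete sets and matchings between consecutive layers -/

section Layers

variable {α : Type*} [DecidableEq α] {j : ℕ} {A C : Finset (Finset α)} {c x : Finset α}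

lemma mem_shadow_iff_of_sized (hA : (A : Set (Finset α)).Sized (j + 1)) :
    c ∈ ∂ A ↔ ∃ x ∈ A, c ⊆ x ∧ #c = j := by
  rw [mem_shadow_iff_exists_mem_card_add_one]
  refine exists_congr fun x ↦ and_congr_right fun hx ↦ and_congr_right fun _ ↦ ?_
  rw [hA hx, Nat.add_right_cancel_iff, eq_comm]

/-- The number of members of `A` containing `c`. -/
def degree (A : Finset (Finset α)) (c : Finset α) : ℕ :=
  #{x ∈ A | c ⊆ x}

lemma sum_degree (A B : Finset (Finset α)) :
    ∑ c ∈ B, degree A c = ∑ x ∈ A, #{c ∈ B | c ⊆ x} :=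
  sum_card_bipartiteAbove_eq_sum_card_bipartiteBelow _

/-- `ψ` maps the `(j + 1)`-sets injectively to `j`-sets contained in them. -/
structure IsDownMatching (j : ℕ) (ψ : Finset α → Finset α) : Prop where
  injOn : Set.InjOn ψ {x | #x = j + 1}
  subset : ∀ ⦃x⦄, #x = j + 1 → ψ x ⊆ x
  card_eq : ∀ ⦃x⦄, #x = j + 1 → #(ψ x) = j

/-- The conjugate of the set map `φ` by a permutation of the ground set. -/
def conjugate (φ : Finset α → Finset α) (π : Equiv.Perm α) (x : Finset α) : Finset α :=
  π • φ (π⁻¹ • x)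

lemma IsDownMatching.conjugate {φ : Finset α → Finset α} (hφ : IsDownMatching j φ)
    (π : Equiv.Perm α) : IsDownMatching j (conjugate φ π) where
  injOn x hx y hy hxy := by
    rw [Set.mem_ofPred_eq] at hx hy
    have hφxy : φ (π⁻¹ • x) = φ (π⁻¹ • y) := smul_left_cancel π hxy
    exact smul_left_cancel π⁻¹ (hφ.injOn (by simpa using hx) (by simpa using hy) hφxy)
  subset x hx := by
    have := smul_finset_subset_smul_finset (a := π)
      (hφ.subset (x := π⁻¹ • x) (by rwa [card_smul_finset]))
    rwa [smul_inv_smul] at this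
  card_eq x hx := by
    rw [UniformComplex.conjugate, card_smul_finset]
    exact hφ.card_eq (by rwa [card_smul_finset])

lemma exists_perm_smul_eq {c' : Finset α} (hx : #x = j + 1) (hc : c ⊆ x) (hcj : #c = j)
    (hc' : c' ⊆ x) (hcj' : #c' = j) : ∃ σ : Equiv.Perm α, σ • x = x ∧ σ • c = c' := by
  have eq_sdiff {c : Finset α} (hc : c ⊆ x) (hcj : #c = j) : ∃ a ∈ x, c = x \ {a} := by
    obtain ⟨a, ha⟩ := card_eq_one.mp (by rw [card_sdiff_of_subset hc]; omega : #(x \ c) = 1)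
    have hax : a ∈ x \ c := ha ▸ mem_singleton_self a
    exact ⟨a, (mem_sdiff.mp hax).1, by rw [← ha, Finset.sdiff_sdiff_eq_self hc]⟩
  obtain ⟨a, ha, rfl⟩ := eq_sdiff hc hcj
  obtain ⟨b, hb, rfl⟩ := eq_sdiff hc' hcj'
  have hswap : Equiv.swap a b • x = x := by
    refine eq_of_subset_of_card_le (fun y hy ↦ ?_) (card_smul_finset _ _).ge
    obtain ⟨z, hz, rfl⟩ := mem_smul_finset.mp hy
    simp only [Equiv.Perm.smul_def, Equiv.swap_apply_def]
    split_ifs <;> assumption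
  refine ⟨Equiv.swap a b, hswap, ?_⟩
  rw [smul_finset_sdiff, hswap, smul_finset_singleton, Equiv.Perm.smul_def, Equiv.swap_apply_left]

variable [Fintype α]

/-- The `(j + 1)`-sets all of whose `j`-subsets lie in `C`: the largest `(j + 1)`-uniform family
whose shadow is contained in `C`. -/
def completeSets (j : ℕ) (C : Finset (Finset α)) : Finset (Finset α) :=
  {x | #x = j + 1 ∧ ∀ c ⊆ x, #c = j → c ∈ C}

lemma mem_completeSets :
    x ∈ completeSets j C ↔ #x = j + 1 ∧ ∀ c ⊆ x, #c = j → c ∈ C := by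
  simp [completeSets]

lemma sized_completeSets : (completeSets j C : Set (Finset α)).Sized (j + 1) :=
  fun _ hx ↦ (mem_completeSets.mp hx).1

lemma subset_completeSets_iff (hA : (A : Set (Finset α)).Sized (j + 1)) :
    A ⊆ completeSets j C ↔ ∂ A ⊆ C := by
  refine ⟨fun h c hc ↦ ?_, fun h x hx ↦ mem_completeSets.mpr ⟨hA hx, fun c hcx hcj ↦ ?_⟩⟩
  · obtain ⟨x, hx, hcx, hcj⟩ := (mem_shadow_iff_of_sized hA).mp hc
    exact (mem_completeSets.mp (h hx)).2 c hcx hcj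
  · exact h ((mem_shadow_iff_of_sized hA).mpr ⟨x, hx, hcx, hcj⟩)

lemma shadow_completeSets_subset : ∂ (completeSets j C) ⊆ C :=
  (subset_completeSets_iff sized_completeSets).mp subset_rfl

lemma card_le_card_shadow (hα : Fintype.card α ≤ 2 * j + 1)
    (hA : (A : Set (Finset α)).Sized (j + 1)) : #A ≤ #(∂ A) := by
  have hLYM : #A * (j + 1) ≤ #(∂ A) * (j + 1) :=
    (local_lubell_yamamoto_meshalkin_inequality_mul hA).trans (Nat.mul_le_mul_left _ (by omega))
  exact Nat.le_of_mul_le_mul_right hLYM (by omega)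

lemma card_completeSets_le (hα : Fintype.card α ≤ 2 * j + 1) (C : Finset (Finset α)) :
    #(completeSets j C) ≤ #C :=
  (card_le_card_shadow hα sized_completeSets).trans (card_le_card shadow_completeSets_subset)

lemma exists_isDownMatching (hα : Fintype.card α ≤ 2 * j + 1) :
    ∃ φ : Finset α → Finset α, IsDownMatching j φ := by
  let N (x : {x : Finset α // #x = j + 1}) : Finset (Finset α) := ∂ {x.1}
  have hbiUnion (s : Finset {x : Finset α // #x = j + 1}) :
      s.biUnion N = ∂ (s.image Subtype.val) := by
    ext c
    simp [N, mem_shadow_iff_exists_mem_card_add_one]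
  have hall (s : Finset {x : Finset α // #x = j + 1}) : #s ≤ #(s.biUnion N) := by
    rw [hbiUnion, ← card_image_of_injective s Subtype.val_injective]
    refine card_le_card_shadow hα fun x hx ↦ ?_
    obtain ⟨y, _, rfl⟩ := mem_image.mp hx
    exact y.2
  obtain ⟨f, hf_inj, hf⟩ := (all_card_le_biUnion_card_iff_exists_injective N).mp hall
  have hmem (x : {x : Finset α // #x = j + 1}) : f x ⊆ x ∧ #(f x) = j := by
    have := (mem_shadow_iff_of_sized (j := j) (A := {x.1}) (by simpa using x.2)).mp (hf x)
    simpa using this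
  refine ⟨fun x ↦ if h : #x = j + 1 then f ⟨x, h⟩ else ∅, ?_, ?_, ?_⟩
  · intro x hx y hy hxy
    rw [Set.mem_ofPred_eq] at hx hy
    simp only [hx, hy, dif_pos] at hxy
    exact congrArg Subtype.val (hf_inj hxy)
  · intro x hx
    simpa only [hx, dif_pos] using (hmem ⟨x, hx⟩).1
  · intro x hx
    simpa only [hx, dif_pos] using (hmem ⟨x, hx⟩).2

lemma card_conjugate_smul_eq (φ : Finset α → Finset α) {σ : Equiv.Perm α} (hσ : σ • x = x) :
    #{π | conjugate φ π x = σ • c} = #{π | conjugate φ π x = c} := by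
  refine card_equiv (Equiv.mulLeft σ⁻¹) fun π ↦ ?_
  rw [mem_filter_univ, mem_filter_univ, Equiv.coe_mulLeft, conjugate, conjugate]
  rw [mul_inv_rev, inv_inv, mul_smul, mul_smul, hσ, inv_smul_eq_iff]

-- Under a uniformly random conjugation the image of `x` is equidistributed over the `j`-subsets.
lemma succ_mul_card_conjugate_eq {φ : Finset α → Finset α} (hφ : IsDownMatching j φ)
    (hx : #x = j + 1) (hc : c ⊆ x) (hcj : #c = j) :
    (j + 1) * #{π | conjugate φ π x = c} = (Fintype.card α).factorial := by
  have hfiber : ∀ c' ∈ powersetCard j x,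
      #{π | conjugate φ π x = c'} = #{π | conjugate φ π x = c} := by
    intro c' hc'
    obtain ⟨hc'x, hc'j⟩ := mem_powersetCard.mp hc'
    obtain ⟨σ, hσx, rfl⟩ := exists_perm_smul_eq hx hc hcj hc'x hc'j
    exact card_conjugate_smul_eq φ hσx
  have htotal : #(univ : Finset (Equiv.Perm α)) =
      ∑ c' ∈ powersetCard j x, #{π | conjugate φ π x = c'} :=
    card_eq_sum_card_fiberwise fun π _ ↦ mem_coe.mpr <|
      mem_powersetCard.mpr ⟨(hφ.conjugate π).subset hx, (hφ.conjugate π).card_eq hx⟩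
  rw [← Fintype.card_perm, ← card_univ, htotal, sum_congr rfl hfiber, sum_const,
    card_powersetCard, hx, Nat.choose_succ_self_right, smul_eq_mul]

lemma succ_mul_card_conjugate_mem_le {φ : Finset α → Finset α} (hφ : IsDownMatching j φ)
    (hx : #x = j + 1) (B : Finset (Finset α)) :
    (j + 1) * #{π | conjugate φ π x ∈ B} ≤ (Fintype.card α).factorial * #{c ∈ B | c ⊆ x} := by
  have hfiber (c) (hc : c ∈ {c ∈ B | c ⊆ x ∧ #c = j}) :
      (j + 1) * #{π ∈ {π | conjugate φ π x ∈ B} | conjugate φ π x = c} ≤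
        (Fintype.card α).factorial := by
    obtain ⟨_, hcx, hcj⟩ := mem_filter.mp hc
    rw [← succ_mul_card_conjugate_eq hφ hx hcx hcj]
    exact Nat.mul_le_mul_left _ (card_le_card (filter_subset_filter _ (subset_univ _)))
  have hmaps : Set.MapsTo (fun π ↦ conjugate φ π x)
      ({π | conjugate φ π x ∈ B} : Finset (Equiv.Perm α))
      ({c ∈ B | c ⊆ x ∧ #c = j} : Finset (Finset α)) :=
    fun π hπ ↦ mem_coe.mpr <| mem_filter.mpr
      ⟨(mem_filter.mp hπ).2, (hφ.conjugate π).subset hx, (hφ.conjugate π).card_eq hx⟩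
  rw [card_eq_sum_card_fiberwise hmaps, mul_sum]
  calc
    _ ≤ #{c ∈ B | c ⊆ x ∧ #c = j} * (Fintype.card α).factorial := by
      simpa using sum_le_sum hfiber
    _ ≤ _ := by
      rw [mul_comm]
      exact Nat.mul_le_mul_left _ (card_le_card (monotone_filter_right B fun _ _ h ↦ h.1))

lemma exists_conjugate_card_filter_mem_le {φ : Finset α → Finset α} (hφ : IsDownMatching j φ)
    (hA : (A : Set (Finset α)).Sized (j + 1)) (B : Finset (Finset α)) :
    ∃ π, (j + 1) * #{x ∈ A | conjugate φ π x ∈ B} ≤ ∑ c ∈ B, degree A c := by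
  have hswap : ∑ π : Equiv.Perm α, #{x ∈ A | conjugate φ π x ∈ B} =
      ∑ x ∈ A, #{π | conjugate φ π x ∈ B} :=
    sum_card_bipartiteAbove_eq_sum_card_bipartiteBelow _
  have hsum : ∑ π : Equiv.Perm α, (j + 1) * #{x ∈ A | conjugate φ π x ∈ B} ≤
      ∑ _π : Equiv.Perm α, ∑ c ∈ B, degree A c := by
    rw [← mul_sum, hswap, mul_sum, sum_const, card_univ, Fintype.card_perm, smul_eq_mul,
      sum_degree, mul_sum]
    exact sum_le_sum fun x hx ↦ succ_mul_card_conjugate_mem_le hφ (hA hx) B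
  obtain ⟨π, _, hπ⟩ := exists_le_of_sum_le univ_nonempty hsum
  exact ⟨π, hπ⟩

lemma exists_isDownMatching_family (hα : Fintype.card α ≤ 2 * j + 1) :
    ∃ Ψ : Finset (Finset α → Finset α), #Ψ ≤ (Fintype.card α).factorial ∧
      (∀ ψ ∈ Ψ, IsDownMatching j ψ) ∧
      ∀ A B : Finset (Finset α), (A : Set (Finset α)).Sized (j + 1) →
        ∃ ψ ∈ Ψ, (j + 1) * #{x ∈ A | ψ x ∈ B} ≤ ∑ c ∈ B, degree A c := by
  obtain ⟨φ, hφ⟩ := exists_isDownMatching hα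
  refine ⟨univ.image (conjugate φ), ?_, ?_, fun A B hA ↦ ?_⟩
  · rw [← Fintype.card_perm, ← card_univ]
    exact card_image_le
  · rw [forall_mem_image]
    exact fun π _ ↦ hφ.conjugate π
  · obtain ⟨π, hπ⟩ := exists_conjugate_card_filter_mem_le hφ hA B
    exact ⟨_, mem_image_of_mem _ (mem_univ π), hπ⟩

end Layers

/-! ### Approximating a family by its core -/

section Degrees

variable {α : Type*} [DecidableEq α] {j : ℕ} {A : Finset (Finset α)} {c : Finset α}

lemma degree_mul_le_card_shadow (hA : (A : Set (Finset α)).Sized (j + 1)) (hc : #c = j) :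
    degree A c * j ≤ #(∂ {x ∈ A | c ⊆ x}) := by
  set S := {x ∈ A | c ⊆ x}
  set f : Finset α → Finset (Finset α) := fun x ↦ (powersetCard j x).erase c
  have hSsized : (S : Set (Finset α)).Sized (j + 1) := fun x hx ↦ hA (mem_of_mem_filter x hx)
  have hsub : S.biUnion f ⊆ ∂ S := by
    intro d hd
    obtain ⟨x, hx, hdx⟩ := mem_biUnion.mp hd
    obtain ⟨hdx, hdj⟩ := mem_powersetCard.mp (mem_of_mem_erase hdx)
    exact (mem_shadow_iff_of_sized hSsized).mpr ⟨x, hx, hdx, hdj⟩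
  have hdisj : ∀ x ∈ S, ∀ y ∈ S, x ≠ y → Disjoint (f x) (f y) := by
    refine fun x hx y hy hxy ↦ disjoint_left.mpr fun d hdx hdy ↦ ?_
    obtain ⟨hdc, hdx⟩ := mem_erase.mp hdx
    obtain ⟨hdx, hdj⟩ := mem_powersetCard.mp hdx
    have hdy := (mem_powersetCard.mp (mem_of_mem_erase hdy)).1
    have hlt : #(x ∩ y) < j + 1 := by
      by_contra! hle
      have hx' : x ∩ y = x := eq_of_subset_of_card_le inter_subset_left (by rwa [hSsized hx])
      have hy' : x ∩ y = y := eq_of_subset_of_card_le inter_subset_right (by rwa [hSsized hy])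
      exact hxy (hx'.symm.trans hy')
    have hcxy : c = x ∩ y := eq_of_subset_of_card_le
      (subset_inter (mem_filter.mp hx).2 (mem_filter.mp hy).2) (by omega)
    exact hdc ((eq_of_subset_of_card_le (subset_inter hdx hdy) (by omega)).trans hcxy.symm)
  have hcard : ∀ x ∈ S, #(f x) = j := fun x hx ↦ by
    rw [card_erase_of_mem (mem_powersetCard.mpr ⟨(mem_filter.mp hx).2, hc⟩), card_powersetCard,
      hSsized hx, Nat.choose_succ_self_right, Nat.add_sub_cancel]
  calc
    degree A c * j = #(S.biUnion f) := by
      rw [card_biUnion hdisj, sum_congr rfl hcard, sum_const, smul_eq_mul, degree]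
    _ ≤ #(∂ S) := card_le_card hsub

variable [Fintype α] {C G T : Finset (Finset α)}

lemma sum_degree_completeSets (hG : (G : Set (Finset α)).Sized j) :
    ∑ c ∈ G, degree (completeSets j G) c = #(completeSets j G) * (j + 1) := by
  rw [sum_degree, ← smul_eq_mul, ← sum_const]
  refine sum_congr rfl fun x hx ↦ ?_
  obtain ⟨hxj, hxG⟩ := mem_completeSets.mp hx
  have : {c ∈ G | c ⊆ x} = powersetCard j x := by
    ext c
    rw [mem_filter, mem_powersetCard]
    exact ⟨fun h ↦ ⟨h.2, hG h.1⟩, fun h ↦ ⟨hxG c h.1 h.2, h.1⟩⟩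
  rw [this, card_powersetCard, hxj, Nat.choose_succ_self_right]

lemma card_upShadow_singleton_le (c : Finset α) : #(∂⁺ {c}) ≤ Fintype.card α - #c := by
  rw [upShadow, sup_singleton, ← card_compl]
  exact card_image_le

lemma card_upShadow_le (C : Finset (Finset α)) : #(∂⁺ C) ≤ #C * Fintype.card α := by
  rw [upShadow, sup_eq_biUnion]
  exact card_biUnion_le_card_mul _ _ _ fun c _ ↦ card_image_le.trans (card_le_univ _)

lemma mem_upShadow_iff_of_sized (hC : (C : Set (Finset α)).Sized j) {x : Finset α} :
    x ∈ ∂⁺ C ↔ #x = j + 1 ∧ ∃ c ∈ C, c ⊆ x := by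
  rw [mem_upShadow_iff_exists_mem_card_add_one]
  constructor
  · rintro ⟨c, hc, hcx, h⟩
    exact ⟨by rw [h, hC hc], c, hc, hcx⟩
  · rintro ⟨hx, c, hc, hcx⟩
    exact ⟨c, hc, hcx, by rw [hx, hC hc]⟩

lemma card_upShadow_singleton_sdiff_add_degree_le (hA : (A : Set (Finset α)).Sized (j + 1))
    (hc : #c = j) : #(∂⁺ {c} \ A) + degree A c ≤ Fintype.card α - j := by
  have hsub : {x ∈ A | c ⊆ x} ⊆ ∂⁺ {c} ∩ A := fun x hx ↦ by
    obtain ⟨hxA, hcx⟩ := mem_filter.mp hx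
    refine mem_inter.mpr ⟨mem_upShadow_iff_exists_mem_card_add_one.mpr ?_, hxA⟩
    exact ⟨c, mem_singleton_self c, hcx, by rw [hA hxA, hc]⟩
  calc
    #(∂⁺ {c} \ A) + degree A c ≤ #(∂⁺ {c} \ A) + #(∂⁺ {c} ∩ A) := by
      gcongr
      exact card_le_card hsub
    _ = #(∂⁺ {c}) := card_sdiff_add_card_inter _ _
    _ ≤ Fintype.card α - j := hc ▸ card_upShadow_singleton_le c

lemma sum_card_upShadow_singleton_sdiff_le {b : ℕ} (hα : Fintype.card α ≤ 2 * j + 1)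
    (hG : (G : Set (Finset α)).Sized j) (hb : #(completeSets j G) + b = #G) :
    ∑ c ∈ G, #(∂⁺ {c} \ completeSets j G) ≤ Fintype.card α * b := by
  set K := completeSets j G
  have hsum : ∑ c ∈ G, #(∂⁺ {c} \ K) + #K * (j + 1) ≤ #G * (Fintype.card α - j) := by
    rw [← sum_degree_completeSets hG, ← sum_add_distrib, ← smul_eq_mul, ← sum_const]
    exact sum_le_sum fun c hc ↦
      card_upShadow_singleton_sdiff_add_degree_le sized_completeSets (hG hc)
  have hK : #K * (Fintype.card α - j) ≤ #K * (j + 1) := Nat.mul_le_mul_left _ (by omega)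
  have hb' : (Fintype.card α - j) * b ≤ Fintype.card α * b :=
    Nat.mul_le_mul_right _ (Nat.sub_le _ _)
  rw [← hb, add_mul] at hsum
  linarith

lemma card_upShadow_sdiff_le_sum (T K : Finset (Finset α)) :
    #(∂⁺ T \ K) ≤ ∑ c ∈ T, #(∂⁺ {c} \ K) := by
  refine (card_le_card fun x hx ↦ ?_).trans card_biUnion_le
  obtain ⟨hxT, hxK⟩ := mem_sdiff.mp hx
  obtain ⟨c, hc, hcx⟩ := mem_upShadow_iff_exists_mem_card_add_one.mp hxT
  refine mem_biUnion.mpr ⟨c, hc, mem_sdiff.mpr ⟨?_, hxK⟩⟩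
  exact mem_upShadow_iff_exists_mem_card_add_one.mpr ⟨c, mem_singleton_self c, hcx⟩

/-- `F` is a core of `G`: a subfamily containing every member of `G` that lies in at least
`(j + 1) / (16 * m)` complete sets of `G`. -/
structure IsCore (m j : ℕ) (F G : Finset (Finset α)) : Prop where
  subset : F ⊆ G
  degree_lt : ∀ c ∈ G, c ∉ F → 16 * m * degree (completeSets j G) c < j + 1

/-- The family recovered from the certificate `(T, Ω, M)`: in the application `T` is a sample of a
family `G`, `Ω` lists the upper neighbours of `T` that are not complete in `G`, and `M` consists
of the high degree members of `G` out of reach of the sample. -/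
def reconstruct (T Ω M : Finset (Finset α)) : Finset (Finset α) :=
  ∂ (∂⁺ T \ Ω) ∪ M

/-- The members of `G` that every core of `G` has to contain. -/
def highDegree (m j : ℕ) (G : Finset (Finset α)) : Finset (Finset α) :=
  {c ∈ G | j + 1 ≤ 16 * m * degree (completeSets j G) c}

/-- The members of high degree that share no complete set with any member of the sample `T`. -/
def unreached (m j : ℕ) (T G : Finset (Finset α)) : Finset (Finset α) :=
  {c ∈ highDegree m j G | Disjoint T (∂ {x ∈ completeSets j G | c ⊆ x})}

lemma unreached_subset {m : ℕ} : unreached m j T G ⊆ G :=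
  (filter_subset _ _).trans (filter_subset _ _)

lemma isCore_reconstruct {m : ℕ} (hG : (G : Set (Finset α)).Sized j) (hT : T ⊆ G) :
    IsCore m j (reconstruct T (∂⁺ T \ completeSets j G) (unreached m j T G)) G where
  subset := by
    refine union_subset ?_ unreached_subset
    rw [sdiff_sdiff_right_self]
    exact (shadow_mono inter_subset_right).trans shadow_completeSets_subset
  degree_lt c hc hcF := by
    set K := completeSets j G
    by_contra! hdeg
    rw [reconstruct, sdiff_sdiff_right_self, mem_union, not_or, unreached, highDegree,
      mem_filter, mem_filter] at hcF
    refine hcF.2 ⟨⟨hc, hdeg⟩, disjoint_left.mpr fun d hdT hd ↦ hcF.1 ?_⟩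
    have hKsized : (({x ∈ K | c ⊆ x} : Finset _) : Set (Finset α)).Sized (j + 1) :=
      fun x hx ↦ sized_completeSets (mem_of_mem_filter x hx)
    obtain ⟨x, hx, hdx, _⟩ := (mem_shadow_iff_of_sized hKsized).mp hd
    obtain ⟨hxK, hcx⟩ := mem_filter.mp hx
    have hxT : x ∈ ∂⁺ T := (mem_upShadow_iff_of_sized fun _ h ↦ hG (hT h)).mpr
      ⟨sized_completeSets hxK, d, hdT, hdx⟩
    exact mem_shadow_iff_exists_mem_card_add_one.mpr
      ⟨x, mem_inter.mpr ⟨hxT, hxK⟩, hcx, by rw [sized_completeSets hxK, hG hc]⟩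

end Degrees

/-- `m` is of the order of `log n`: large enough that `2 ^ m` beats a fixed power of `n`, and so
small that a fixed power of `m` is below `n`. -/
structure IsLogScale (n m : ℕ) : Prop where
  pow_le : n ^ 50 ≤ 2 ^ m
  mul_pow_le : 10 ^ 8 * m ^ 6 ≤ n
  one_le : 1 ≤ m

namespace IsLogScale

variable {n m : ℕ}

lemma le_left (h : IsLogScale n m) : 10 ^ 8 ≤ n :=
  (Nat.le_mul_of_pos_right _ (pow_pos h.one_le 6)).trans h.mul_pow_le

lemma le_left_real (h : IsLogScale n m) : (10 : ℝ) ^ 8 ≤ n := by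
  exact_mod_cast h.le_left

lemma left_pos (h : IsLogScale n m) : (0 : ℝ) < n :=
  lt_of_lt_of_le (by norm_num) h.le_left_real

lemma one_le_left (h : IsLogScale n m) : (1 : ℝ) ≤ n :=
  le_trans (by norm_num) h.le_left_real

lemma one_le_right (h : IsLogScale n m) : (1 : ℝ) ≤ m := by
  exact_mod_cast h.one_le

lemma mul_pow_le_real (h : IsLogScale n m) {k : ℕ} (hk : k ≤ 6) : (10 : ℝ) ^ 8 * m ^ k ≤ n :=
  calc
    (10 : ℝ) ^ 8 * (m : ℝ) ^ k ≤ (10 : ℝ) ^ 8 * (m : ℝ) ^ 6 := by gcongr; exact h.one_le_right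
    _ ≤ (n : ℝ) := by exact_mod_cast h.mul_pow_le

lemma pow_le_real (h : IsLogScale n m) : (n : ℝ) ^ 50 ≤ 2 ^ m := by
  exact_mod_cast h.pow_le

lemma one_sub_pow_le (h : IsLogScale n m) {p : ℝ} (hp : p ≤ 1) {t : ℕ} (ht : m ≤ t * p) :
    (1 - p) ^ t ≤ 1 / (n : ℝ) ^ 50 := by
  have hn := h.left_pos
  have hexp : (n : ℝ) ^ 50 ≤ Real.exp m :=
    calc
      (n : ℝ) ^ 50 ≤ 2 ^ m := h.pow_le_real
      _ ≤ Real.exp 1 ^ m := by gcongr; linarith [Real.add_one_le_exp 1]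
      _ = Real.exp m := Real.exp_one_pow m
  calc
    (1 - p) ^ t ≤ Real.exp (-p) ^ t := by
      have := sub_nonneg.mpr hp
      gcongr
      exact Real.one_sub_le_exp_neg p
    _ = Real.exp (-(t * p)) := by rw [← Real.exp_nat_mul, mul_neg]
    _ ≤ Real.exp (-m) := by gcongr
    _ ≤ 1 / (n : ℝ) ^ 50 := by rw [Real.exp_neg, ← one_div]; gcongr

lemma le_div_pow_mul (h : IsLogScale n m) {g c k : ℕ} (hk : k ≤ 50) (hc : c ≤ g * n ^ (50 - k)) :
    (c : ℝ) ≤ (g : ℝ) / n ^ k * 2 ^ m := by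
  have hn := h.left_pos
  calc
    (c : ℝ) ≤ g * (n : ℝ) ^ (50 - k) := by exact_mod_cast hc
    _ = (g : ℝ) / n ^ k * n ^ 50 := by
      rw [pow_sub₀ _ hn.ne' hk]
      ring
    _ ≤ (g : ℝ) / n ^ k * 2 ^ m := by gcongr; exact h.pow_le_real

end IsLogScale

section Certificates

variable {n m j b : ℕ}

lemma sq_div_le_card_shadow_filter (h : IsLogScale n m) (hj : n ≤ 2 * j + 1) {α : Type*}
    [DecidableEq α] {A : Finset (Finset α)} {c : Finset α}
    (hA : (A : Set (Finset α)).Sized (j + 1)) (hc : #c = j) (hdeg : j + 1 ≤ 16 * m * degree A c) :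
    (n : ℝ) ^ 2 / (128 * m) ≤ #(∂ {x ∈ A | c ⊆ x}) := by
  have hn := h.le_left_real
  have hm := h.one_le_right
  have hj' : (n : ℝ) ≤ 2 * j + 1 := by exact_mod_cast hj
  have hdeg' : (j : ℝ) + 1 ≤ 16 * m * degree A c := by exact_mod_cast hdeg
  have hdegree : (n : ℝ) / (32 * m) ≤ degree A c := by
    rw [div_le_iff₀ (by positivity)]
    linarith
  calc
    (n : ℝ) ^ 2 / (128 * m) = n / (32 * m) * (n / 4) := by field_simp; norm_num
    _ ≤ degree A c * j := by gcongr; linarith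
    _ ≤ #(∂ {x ∈ A | c ⊆ x}) := by exact_mod_cast degree_mul_le_card_shadow hA hc

variable {C G : Finset (Finset (Fin n))} {g : ℕ}

lemma sq_div_le_of_pow_le (h : IsLogScale n m) (hg : n ^ 30 ≤ g) :
    (n : ℝ) ^ 2 / (128 * m) ≤ g :=
  calc
    (n : ℝ) ^ 2 / (128 * m) ≤ n ^ 2 :=
      div_le_self (by positivity) (by linarith [h.one_le_right])
    _ ≤ (n : ℝ) ^ 30 := pow_le_pow_right₀ h.one_le_left (by norm_num)
    _ ≤ g := by exact_mod_cast hg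

lemma exists_sampleSize (h : IsLogScale n m) (hg : n ^ 30 ≤ g) :
    ∃ t : ℕ, 0 < t ∧ (t : ℝ) ≤ 129 * m ^ 2 * g / n ^ 2 ∧
      (1 - (n : ℝ) ^ 2 / (128 * m) / g) ^ t ≤ 1 / (n : ℝ) ^ 50 := by
  have hn := h.left_pos
  have hm := h.one_le_right
  have hg₂ : (n : ℝ) ^ 2 ≤ g := (pow_le_pow_right₀ h.one_le_left (by norm_num)).trans
    (by exact_mod_cast hg : (n : ℝ) ^ 30 ≤ g)
  have hg₀ : (0 : ℝ) < g := (pow_pos hn 2).trans_le hg₂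
  have hone : (1 : ℝ) ≤ m ^ 2 * g / n ^ 2 := by
    rw [one_le_div (by positivity)]
    exact hg₂.trans (le_mul_of_one_le_left hg₀.le (one_le_pow₀ hm))
  refine ⟨⌈128 * (m : ℝ) ^ 2 * g / n ^ 2⌉₊, Nat.ceil_pos.mpr (by positivity), ?_, ?_⟩
  · calc
      (⌈128 * (m : ℝ) ^ 2 * g / n ^ 2⌉₊ : ℝ) ≤ 128 * (m : ℝ) ^ 2 * g / n ^ 2 + 1 :=
        (Nat.ceil_lt_add_one (by positivity)).le
      _ ≤ 128 * (m : ℝ) ^ 2 * g / n ^ 2 + m ^ 2 * g / n ^ 2 := by gcongr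
      _ = 129 * m ^ 2 * g / n ^ 2 := by ring
  · refine h.one_sub_pow_le ((div_le_one hg₀).mpr (sq_div_le_of_pow_le h hg)) ?_
    calc
      (m : ℝ) = 128 * (m : ℝ) ^ 2 * g / n ^ 2 * (n ^ 2 / (128 * m) / g) := by field_simp
      _ ≤ _ := by gcongr; exact Nat.le_ceil _

lemma highDegree_neighbourhood (h : IsLogScale n m) (hj : n ≤ 2 * j + 1)
    (hG : (G : Set (Finset (Fin n))).Sized j) : ∀ c ∈ highDegree m j G,
      ∂ {x ∈ completeSets j G | c ⊆ x} ⊆ G ∧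
        (n : ℝ) ^ 2 / (128 * m) ≤ #(∂ {x ∈ completeSets j G | c ⊆ x}) := fun c hc ↦ by
  obtain ⟨hcG, hdeg⟩ := mem_filter.mp hc
  exact ⟨(shadow_mono (filter_subset _ _)).trans shadow_completeSets_subset,
    sq_div_le_card_shadow_filter h hj sized_completeSets (hG hcG) hdeg⟩

lemma exists_sample (h : IsLogScale n m) (hj : n ≤ 2 * j + 1)
    (hG : (G : Set (Finset (Fin n))).Sized j) (hg : #G = g)
    (hb : #(completeSets j G) + b = g) (hgn : n ^ 30 ≤ g) (hgb : g ≤ 5 * n * b) :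
    ∃ T ⊆ G, (#T : ℝ) ≤ 129 * m ^ 2 * g / n ^ 2 ∧
      (#(∂⁺ T \ completeSets j G) : ℝ) ≤ 258 * m ^ 2 * b / n ∧
      (#(unreached m j T G) : ℝ) ≤ 2 * g / n ^ 50 := by
  have hn := h.left_pos
  have hm := h.one_le_right
  have hg₀ : 0 < g := (pow_pos (Nat.cast_pos.mp hn) 30).trans_le hgn
  have hb₀ : 0 < b := Nat.pos_of_mul_pos_left (hg₀.trans_le hgb)
  have hweight : ∑ c ∈ G, (#(∂⁺ {c} \ completeSets j G) : ℝ) ≤ n * b := by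
    have := sum_card_upShadow_singleton_sdiff_le (by simpa using hj) hG (hb.trans hg.symm)
    rw [Fintype.card_fin] at this
    exact_mod_cast this
  have hβ := sq_div_le_of_pow_le h hgn
  obtain ⟨t, ht₀, ht, hmiss⟩ := exists_sampleSize h hgn
  obtain ⟨T, hTG, hTt, hTw, hTH⟩ := exists_subset_weight_le_unhit_le
    (X := t * (n * b) / g) (Y := g / n ^ 50) (t := t)
    (w := fun c ↦ (#(∂⁺ {c} \ completeSets j G) : ℝ))
    (card_pos.mp (hg₀.trans_eq hg.symm)) (fun _ ↦ Nat.cast_nonneg _)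
    (hβ.trans_eq (by rw [hg])) (highDegree_neighbourhood h hj hG)
    (by positivity) (by positivity) (by rw [hg]; gcongr) (by
      rw [hg, div_eq_mul_one_div (g : ℝ) ((n : ℝ) ^ 50)]
      refine mul_le_mul ?_ hmiss ?_ (by positivity)
      · exact_mod_cast (card_le_card (filter_subset _ _)).trans_eq hg
      · exact pow_nonneg (sub_nonneg.mpr ((div_le_one (by positivity)).mpr hβ)) _)
  have hunreached : (#(unreached m j T G) : ℝ) ≤ 2 * (g / n ^ 50) := hTH
  refine ⟨T, hTG, (Nat.cast_le.mpr hTt).trans ht, ?_, hunreached.trans_eq (by ring)⟩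
  calc
    (#(∂⁺ T \ completeSets j G) : ℝ) ≤ ∑ c ∈ T, (#(∂⁺ {c} \ completeSets j G) : ℝ) := by
      exact_mod_cast card_upShadow_sdiff_le_sum T _
    _ ≤ 2 * (t * (n * b) / g) := hTw
    _ ≤ 2 * (129 * m ^ 2 * g / n ^ 2 * (n * b) / g) := by gcongr
    _ = 258 * m ^ 2 * b / n := by field_simp; norm_num

/-- The candidate cores: everything reconstructed from a small certificate inside `C`. The bounds
on the sizes are those provided by `exists_sample`. -/
def coreCandidates (m g b : ℕ) (C : Finset (Finset (Fin n))) : Finset (Finset (Finset (Fin n))) :=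
  image (fun p ↦ reconstruct p.1 p.2.1 p.2.2)
    (subsetsCardLE C (129 * m ^ 2 * g / n ^ 2) ×ˢ subsetsCardLE (∂⁺ C) (258 * m ^ 2 * b / n) ×ˢ
      subsetsCardLE C (2 * g / n ^ 50))

lemma exists_isCore_mem_coreCandidates (h : IsLogScale n m) (hj : n ≤ 2 * j + 1)
    (hC : (C : Set (Finset (Fin n))).Sized j) (hGC : G ⊆ C) (hg : #G = g)
    (hb : #(completeSets j G) + b = g) (hgn : n ^ 30 ≤ g) (hgb : g ≤ 5 * n * b) :
    ∃ F ∈ coreCandidates m g b C, IsCore m j F G := by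
  have hG : (G : Set (Finset (Fin n))).Sized j := fun _ hc ↦ hC (hGC hc)
  obtain ⟨T, hTG, hT, hΩ, hM⟩ := exists_sample h hj hG hg hb hgn hgb
  refine ⟨_, mem_image.mpr ⟨(T, ∂⁺ T \ completeSets j G, unreached m j T G), ?_, rfl⟩,
    isCore_reconstruct hG hTG⟩
  refine mem_product.mpr ⟨?_, mem_product.mpr ⟨?_, ?_⟩⟩
  · exact mem_subsetsCardLE.mpr ⟨hTG.trans hGC, hT⟩
  · exact mem_subsetsCardLE.mpr ⟨sdiff_subset.trans (upShadow_monotone (hTG.trans hGC)), hΩ⟩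
  · exact mem_subsetsCardLE.mpr ⟨unreached_subset.trans hGC, hM⟩

lemma div_pow_le_of_le_mul (hn : 1 ≤ n) (hgb : g ≤ 5 * n * b) {k : ℕ} (hk : 2 ≤ k) :
    (g : ℝ) / n ^ k ≤ 5 * (b / n) := by
  have hn' : (1 : ℝ) ≤ n := by exact_mod_cast hn
  calc
    (g : ℝ) / n ^ k ≤ 5 * n * b / n ^ 2 := by
      gcongr
      exact_mod_cast hgb
    _ = 5 * (b / n) := by field_simp

lemma certificate_exponent_le (h : IsLogScale n m) (hgb : g ≤ 5 * n * b) :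
    (m * (129 * m ^ 2 * g / n ^ 2) + 2 * (g / n ^ 30) +
      (m * (258 * m ^ 2 * b / n) + 2 * (g / n ^ 29) +
        (m * (2 * g / n ^ 50) + 2 * (g / n ^ 30))) : ℝ) ≤ b / (1000 * m) := by
  have hn := h.left_pos
  have hm := h.one_le_right
  have hmm : (m : ℝ) ≤ (m : ℝ) ^ 3 := le_self_pow₀ hm (by norm_num)
  set u : ℝ := b / n with hu
  have hdiv {k : ℕ} (hk : 2 ≤ k) : (g : ℝ) / n ^ k ≤ 5 * u :=
    div_pow_le_of_le_mul (Nat.one_le_cast.mp h.one_le_left) hgb hk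
  have hsample : (m : ℝ) * (129 * m ^ 2 * g / n ^ 2) ≤ 645 * (m ^ 3 * u) :=
    calc
      (m : ℝ) * (129 * m ^ 2 * g / n ^ 2) = 129 * m ^ 3 * (g / n ^ 2) := by ring
      _ ≤ 129 * m ^ 3 * (5 * u) := by gcongr; exact hdiv le_rfl
      _ = 645 * (m ^ 3 * u) := by ring
  have hincomplete : (m : ℝ) * (258 * m ^ 2 * b / n) = 258 * (m ^ 3 * u) := by rw [hu]; ring
  have hmissed : (m : ℝ) * (2 * g / n ^ 50) ≤ 10 * (m ^ 3 * u) :=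
    calc
      (m : ℝ) * (2 * g / n ^ 50) = 2 * m * (g / n ^ 50) := by ring
      _ ≤ 2 * m ^ 3 * (5 * u) := by gcongr; exact hdiv (by norm_num)
      _ = 10 * (m ^ 3 * u) := by ring
  have hu_le : u ≤ m ^ 3 * u := le_mul_of_one_le_left (by positivity) (one_le_pow₀ hm)
  have hu₀ : 0 ≤ u := by positivity
  have htotal : 1000 * (m ^ 3 * u) ≤ b / (1000 * m) := by
    rw [hu, le_div_iff₀ (by positivity)]
    calc
      1000 * ((m : ℝ) ^ 3 * (b / n)) * (1000 * m) = 10 ^ 6 * (m : ℝ) ^ 4 * (b / n) := by ring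
      _ ≤ (n : ℝ) * (b / n) := by
        gcongr
        linarith [h.mul_pow_le_real (k := 4) (by norm_num), pow_pos (by linarith : (0 : ℝ) < m) 4]
      _ = (b : ℝ) := by field_simp
  linarith [hdiv (k := 30) (by norm_num), hdiv (k := 29) (by norm_num)]

lemma card_coreCandidates_le (h : IsLogScale n m) (hC : #C ≤ g * n ^ 20) (hgb : g ≤ 5 * n * b) :
    (#(coreCandidates m g b C) : ℝ) ≤ (2 : ℝ) ^ ((b : ℝ) / (1000 * m)) := by
  have hUC : #(∂⁺ C) ≤ g * n ^ 21 :=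
    calc
      #(∂⁺ C) ≤ #C * n := by simpa using card_upShadow_le C
      _ ≤ g * n ^ 20 * n := by gcongr
      _ = g * n ^ 21 := by ring
  have hT := card_subsetsCardLE_le C (129 * m ^ 2 * g / n ^ 2)
    (h.le_div_pow_mul (k := 30) (by norm_num) hC)
  have hΩ := card_subsetsCardLE_le (∂⁺ C) (258 * m ^ 2 * b / n)
    (h.le_div_pow_mul (k := 29) (by norm_num) hUC)
  have hM := card_subsetsCardLE_le C (2 * g / n ^ 50)
    (h.le_div_pow_mul (k := 30) (by norm_num) hC)
  calc
    (#(coreCandidates m g b C) : ℝ) ≤ #(subsetsCardLE C (129 * m ^ 2 * g / n ^ 2)) *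
        (#(subsetsCardLE (∂⁺ C) (258 * m ^ 2 * b / n)) * #(subsetsCardLE C (2 * g / n ^ 50))) := by
      rw [← Nat.cast_mul, ← Nat.cast_mul, ← card_product, ← card_product]
      exact Nat.cast_le.mpr card_image_le
    _ ≤ _ := mul_le_mul hT (mul_le_mul hΩ hM (by positivity) (by positivity))
      (by positivity) (by positivity)
    _ ≤ (2 : ℝ) ^ ((b : ℝ) / (1000 * m)) := by
      rw [← Real.rpow_add two_pos, ← Real.rpow_add two_pos]
      exact Real.rpow_le_rpow_of_exponent_le one_le_two (certificate_exponent_le h hgb)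

end Certificates

/-! ### Containers -/

section ContainerCombinatorics

variable {α : Type*} [DecidableEq α] [Fintype α] {m j g b : ℕ} {r : ℝ}
  {A C F X : Finset (Finset α)}

/-- `A` consists of `(j + 1)`-sets, its shadow is a `g`-subset of `C`, and the shadow has `b` more
members than complete sets. -/
structure HasShadowProfile (j g b : ℕ) (C A : Finset (Finset α)) : Prop where
  sized : (A : Set (Finset α)).Sized (j + 1)
  shadow_subset : ∂ A ⊆ C
  card_shadow : #(∂ A) = g
  card_completeSets : #(completeSets j (∂ A)) + b = g

/-- Containers suited to a core `F` much smaller than the shadow: the sets that some down matching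
in `Ψ` sends into `F`, together with at most `r` exceptional sets. -/
def matchingContainers (j : ℕ) (r : ℝ) (Ψ : Finset (Finset α → Finset α))
    (C F : Finset (Finset α)) : Finset (Finset (Finset α)) :=
  image (fun p ↦ univ.filter (fun x ↦ #x = j + 1 ∧ p.1 x ∈ F) ∪ p.2)
    (Ψ ×ˢ subsetsCardLE (completeSets j C) r)

/-- Containers suited to a core `F` almost as large as the shadow: guess the shadow itself, and
take all its complete sets. -/
def completionContainers (j g b : ℕ) (C F : Finset (Finset α)) : Finset (Finset (Finset α)) :=
  {X ∈ image (fun R ↦ completeSets j (F ∪ R)) (subsetsCardLE C (g - #F)) | #X + b ≤ g}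

variable {Ψ : Finset (Finset α → Finset α)}

lemma sized_of_mem_matchingContainers (hX : X ∈ matchingContainers j r Ψ C F) :
    (X : Set (Finset α)).Sized (j + 1) := by
  obtain ⟨p, hp, rfl⟩ := mem_image.mp hX
  intro x hx
  rcases mem_union.mp hx with hx | hx
  · exact (mem_filter.mp hx).2.1
  · exact sized_completeSets ((mem_subsetsCardLE.mp (mem_product.mp hp).2).1 hx)

lemma card_le_of_mem_matchingContainers (hΨ : ∀ ψ ∈ Ψ, IsDownMatching j ψ)
    (hX : X ∈ matchingContainers j r Ψ C F) : (#X : ℝ) ≤ #F + r := by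
  obtain ⟨⟨ψ, E⟩, hp, rfl⟩ := mem_image.mp hX
  obtain ⟨hψ, hE⟩ := mem_product.mp hp
  have hF : #{x | #x = j + 1 ∧ ψ x ∈ F} ≤ #F := by
    refine card_le_card_of_injOn ψ (fun x hx ↦ (mem_filter.mp hx).2.2) ?_
    exact (hΨ ψ hψ).injOn.mono fun x hx ↦ (mem_filter.mp hx).2.1
  calc
    (#(univ.filter (fun x ↦ #x = j + 1 ∧ ψ x ∈ F) ∪ E) : ℝ) ≤ #{x | #x = j + 1 ∧ ψ x ∈ F} + #E := by
      exact_mod_cast card_union_le _ _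
    _ ≤ #F + r := add_le_add (by exact_mod_cast hF) (mem_subsetsCardLE.mp hE).2

lemma card_filter_sdiff_core_le (hA : HasShadowProfile j g b C A) (hF : IsCore m j F (∂ A))
    {ψ : Finset α → Finset α}
    (hψ : (j + 1) * #{x ∈ A | ψ x ∈ ∂ A \ F} ≤ ∑ c ∈ ∂ A \ F, degree A c) :
    16 * m * #{x ∈ A | ψ x ∈ ∂ A \ F} ≤ g - #F := by
  have hdeg : ∀ c ∈ ∂ A \ F, 16 * m * degree A c ≤ j + 1 := fun c hc ↦ by
    obtain ⟨hc, hcF⟩ := mem_sdiff.mp hc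
    have hmono : degree A c ≤ degree (completeSets j (∂ A)) c :=
      card_le_card (filter_subset_filter _ ((subset_completeSets_iff hA.sized).mpr subset_rfl))
    exact (Nat.mul_le_mul_left _ hmono).trans (hF.degree_lt c hc hcF).le
  refine Nat.le_of_mul_le_mul_right (c := j + 1) ?_ j.succ_pos
  calc
    16 * m * #{x ∈ A | ψ x ∈ ∂ A \ F} * (j + 1)
      = 16 * m * ((j + 1) * #{x ∈ A | ψ x ∈ ∂ A \ F}) := by ring
    _ ≤ 16 * m * ∑ c ∈ ∂ A \ F, degree A c := Nat.mul_le_mul_left _ hψ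
    _ ≤ #(∂ A \ F) * (j + 1) := by
      rw [mul_sum, ← smul_eq_mul (#(∂ A \ F)), ← sum_const]
      exact sum_le_sum hdeg
    _ = (g - #F) * (j + 1) := by rw [card_sdiff_of_subset hF.subset, hA.card_shadow]

lemma exists_mem_matchingContainers (hm : 0 < m) (hΨ : ∀ ψ ∈ Ψ, IsDownMatching j ψ)
    (hΨA : ∀ A B : Finset (Finset α), (A : Set (Finset α)).Sized (j + 1) →
      ∃ ψ ∈ Ψ, (j + 1) * #{x ∈ A | ψ x ∈ B} ≤ ∑ c ∈ B, degree A c)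
    (hA : HasShadowProfile j g b C A) (hF : IsCore m j F (∂ A)) :
    ∃ X ∈ matchingContainers j ((g - #F) / (16 * m)) Ψ C F, A ⊆ X := by
  obtain ⟨ψ, hψ, hψA⟩ := hΨA A (∂ A \ F) hA.sized
  refine ⟨_, mem_image.mpr ⟨(ψ, {x ∈ A | ψ x ∈ ∂ A \ F}), ?_, rfl⟩, fun x hx ↦ ?_⟩
  · have hFg : #F ≤ g := hA.card_shadow ▸ card_le_card hF.subset
    refine mem_product.mpr ⟨hψ, mem_subsetsCardLE.mpr ⟨?_, ?_⟩⟩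
    · exact (filter_subset _ _).trans ((subset_completeSets_iff hA.sized).mpr hA.shadow_subset)
    · rw [← Nat.cast_sub hFg, le_div_iff₀ (by positivity), mul_comm]
      exact_mod_cast card_filter_sdiff_core_le hA hF hψA
  · have hxj := hA.sized hx
    have hψx : ψ x ∈ ∂ A := (mem_shadow_iff_of_sized hA.sized).mpr
      ⟨x, hx, (hΨ ψ hψ).subset hxj, (hΨ ψ hψ).card_eq hxj⟩
    rw [mem_union, mem_filter_univ, mem_filter, mem_sdiff]
    tauto

lemma exists_mem_completionContainers (hA : HasShadowProfile j g b C A) (hF : F ⊆ ∂ A) :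
    ∃ X ∈ completionContainers j g b C F, A ⊆ X := by
  refine ⟨completeSets j (∂ A), mem_filter.mpr ⟨?_, hA.card_completeSets.le⟩,
    (subset_completeSets_iff hA.sized).mpr subset_rfl⟩
  refine mem_image.mpr ⟨∂ A \ F, mem_subsetsCardLE.mpr ⟨?_, ?_⟩, by rw [union_sdiff_of_subset hF]⟩
  · exact sdiff_subset.trans hA.shadow_subset
  · rw [card_sdiff_of_subset hF, Nat.cast_sub (card_le_card hF), hA.card_shadow]

lemma sized_of_mem_completionContainers (hX : X ∈ completionContainers j g b C F) :
    (X : Set (Finset α)).Sized (j + 1) := by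
  obtain ⟨R, -, rfl⟩ := mem_image.mp (mem_filter.mp hX).1
  exact sized_completeSets

end ContainerCombinatorics

section ContainerWeight

variable {α : Type*}

/-- The weight of a family of containers: an upper bound for the number of ways of choosing a
container, a subset of it, and a continuation in the layer above. -/
def containerWeight (n : ℕ) (𝒳 : Finset (Finset α)) : ℝ :=
  ∑ X ∈ 𝒳, (2 : ℝ) ^ ((1 + 1 / (n : ℝ) ^ 3) * (#X : ℝ))

lemma containerWeight_le {n : ℕ} {𝒳 : Finset (Finset α)} {q r : ℝ} (hq : ∀ X ∈ 𝒳, (#X : ℝ) ≤ q)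
    (hr : (#𝒳 : ℝ) ≤ (2 : ℝ) ^ r) :
    containerWeight n 𝒳 ≤ (2 : ℝ) ^ (r + (1 + 1 / (n : ℝ) ^ 3) * q) :=
  calc
    containerWeight n 𝒳 ≤ #𝒳 • (2 : ℝ) ^ ((1 + 1 / (n : ℝ) ^ 3) * q) :=
      sum_le_card_nsmul _ _ _ fun X hX ↦
        Real.rpow_le_rpow_of_exponent_le one_le_two (by gcongr; exact hq X hX)
    _ ≤ (2 : ℝ) ^ (r + (1 + 1 / (n : ℝ) ^ 3) * q) := by
      rw [nsmul_eq_mul, Real.rpow_add two_pos]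
      gcongr

lemma containerWeight_biUnion_le {ι : Type*} [DecidableEq α] (n : ℕ) (S : Finset ι)
    (f : ι → Finset (Finset α)) :
    containerWeight n (S.biUnion f) ≤ ∑ i ∈ S, containerWeight n (f i) := by
  rw [containerWeight, ← sup_eq_biUnion]
  induction S using Finset.induction_on with
  | empty => simp
  | insert i S hi ih =>
    rw [sup_insert, sum_insert hi]
    refine le_trans ?_ (add_le_add_right ih _)
    rw [containerWeight, ← sum_union_inter]
    exact le_add_of_nonneg_right (sum_nonneg fun _ _ ↦ by positivity)

end ContainerWeight

section Containers

variable {n m j g b : ℕ} {C F : Finset (Finset (Fin n))}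
  {Ψ : Finset (Finset (Fin n) → Finset (Fin n))}

lemma factorial_le_two_rpow (n : ℕ) : (n.factorial : ℝ) ≤ (2 : ℝ) ^ ((n : ℝ) ^ 2) := by
  have hfact : n.factorial ≤ 2 ^ (n ^ 2) :=
    calc
      n.factorial ≤ n ^ n := Nat.factorial_le_pow n
      _ ≤ (2 ^ n) ^ n := Nat.pow_le_pow_left Nat.lt_two_pow_self.le n
      _ = 2 ^ (n ^ 2) := by rw [← pow_mul, sq]
  rw [← Nat.cast_pow, Real.rpow_natCast]
  exact_mod_cast hfact

lemma card_matchingContainers_le (h : IsLogScale n m) (hj : n ≤ 2 * j + 1)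
    (hΨ : #Ψ ≤ n.factorial) (hC : #C ≤ g * n ^ 20) (r : ℝ) :
    (#(matchingContainers j r Ψ C F) : ℝ) ≤
      (2 : ℝ) ^ ((n : ℝ) ^ 2 + (m * r + 2 * (g / n ^ 30))) := by
  have hexceptional := card_subsetsCardLE_le (completeSets j C) r (h.le_div_pow_mul (k := 30)
    (by norm_num) ((card_completeSets_le (by simpa using hj) C).trans hC))
  calc
    (#(matchingContainers j r Ψ C F) : ℝ) ≤ #Ψ * #(subsetsCardLE (completeSets j C) r) := by
      rw [← Nat.cast_mul, ← card_product]
      exact Nat.cast_le.mpr card_image_le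
    _ ≤ (2 : ℝ) ^ ((n : ℝ) ^ 2) * (2 : ℝ) ^ (m * r + 2 * ((g : ℝ) / n ^ 30)) :=
      mul_le_mul ((Nat.cast_le.mpr hΨ).trans (factorial_le_two_rpow n)) hexceptional
        (by positivity) (by positivity)
    _ = _ := (Real.rpow_add two_pos _ _).symm

lemma card_completionContainers_le (h : IsLogScale n m) (hC : #C ≤ g * n ^ 20) :
    (#(completionContainers j g b C F) : ℝ) ≤ (2 : ℝ) ^ (m * (g - #F) + 2 * ((g : ℝ) / n ^ 30)) :=
  calc
    (#(completionContainers j g b C F) : ℝ) ≤ #(subsetsCardLE C (g - #F)) :=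
      Nat.cast_le.mpr ((card_le_card (filter_subset _ _)).trans card_image_le)
    _ ≤ _ := card_subsetsCardLE_le C _ (h.le_div_pow_mul (k := 30) (by norm_num) hC)

lemma sq_le_div_of_pow_le (h : IsLogScale n m) (hgn : n ^ 30 ≤ g) (hgb : g ≤ 5 * n * b) :
    (n : ℝ) ^ 2 ≤ b / n := by
  have hn := h.le_left_real
  have hn₀ := h.left_pos
  have hpow : (n : ℝ) ^ 4 ≤ (n : ℝ) ^ 29 := pow_le_pow_right₀ h.one_le_left (by norm_num)
  have hb : (n : ℝ) ^ 29 * n ≤ 5 * b * n :=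
    calc
      (n : ℝ) ^ 29 * n = (n : ℝ) ^ 30 := by ring
      _ ≤ (g : ℝ) := by exact_mod_cast hgn
      _ ≤ 5 * n * (b : ℝ) := by exact_mod_cast hgb
      _ = 5 * b * n := by ring
  have hfive : 5 * (n : ℝ) ^ 3 ≤ (n : ℝ) ^ 4 := by
    rw [pow_succ' (n : ℝ) 3]
    gcongr
    linarith
  rw [le_div_iff₀ hn₀]
  linarith [le_of_mul_le_mul_right hb hn₀]

lemma div_left_le_div_right (h : IsLogScale n m) (b : ℕ) :
    (b : ℝ) / n ≤ 1 / 10 ^ 8 * (b / m) := by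
  have hm := h.one_le_right
  calc
    (b : ℝ) / n ≤ b / (10 ^ 8 * m) := by
      gcongr
      simpa using h.mul_pow_le_real (k := 1) (by norm_num)
    _ = 1 / 10 ^ 8 * (b / m) := by field_simp

lemma container_error_le (h : IsLogScale n m) (hgn : n ^ 30 ≤ g) (hgb : g ≤ 5 * n * b) :
    (n : ℝ) ^ 2 + 2 * ((g : ℝ) / n ^ 30) + 1 / (n : ℝ) ^ 3 * g ≤ 16 / 10 ^ 8 * (b / m) := by
  have hn : 1 ≤ n := Nat.one_le_cast.mp h.one_le_left
  have hgn₃ : 1 / (n : ℝ) ^ 3 * g ≤ 5 * (b / n) := by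
    rw [one_div_mul_eq_div]
    exact div_pow_le_of_le_mul hn hgb (by norm_num)
  linarith [sq_le_div_of_pow_le h hgn hgb, div_left_le_div_right h b,
    div_pow_le_of_le_mul hn hgb (k := 30) (by norm_num)]

lemma containerWeight_matchingContainers_le (h : IsLogScale n m) (hj : n ≤ 2 * j + 1)
    (hΨ : #Ψ ≤ n.factorial) (hΨj : ∀ ψ ∈ Ψ, IsDownMatching j ψ) (hC : #C ≤ g * n ^ 20)
    (hgn : n ^ 30 ≤ g) (hgb : g ≤ 5 * n * b) (hF : (#F : ℝ) ≤ g)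
    (hFb : (b : ℝ) / m ≤ 16 * (g - #F)) :
    containerWeight n (matchingContainers j ((g - #F) / (16 * m)) Ψ C F) ≤
      (2 : ℝ) ^ ((g : ℝ) - b / (150 * m)) := by
  have hm := h.one_le_right
  refine (containerWeight_le (fun X ↦ card_le_of_mem_matchingContainers hΨj)
    (card_matchingContainers_le h hj hΨ hC _)).trans
      (Real.rpow_le_rpow_of_exponent_le one_le_two ?_)
  have herror := container_error_le h hgn hgb
  set ε : ℝ := 1 / (n : ℝ) ^ 3
  set ℓ : ℝ := g - #F
  have hℓ₀ : 0 ≤ ℓ := sub_nonneg.mpr hF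
  have hε₀ : 0 ≤ ε := by positivity
  have hεℓ : 0 ≤ ε * ℓ := mul_nonneg hε₀ hℓ₀
  have hmℓ : (m : ℝ) * (ℓ / (16 * m)) = ℓ / 16 := by field_simp
  have hsize : (1 + ε) * (#F + ℓ / (16 * m)) ≤ (1 + ε) * (g - ℓ + ℓ / 16) := by
    have : ℓ / (16 * m) ≤ ℓ / 16 := div_le_div_of_nonneg_left hℓ₀ (by norm_num) (by linarith)
    gcongr
    linarith
  have hbm : (b : ℝ) / (150 * m) = 1 / 150 * (b / m) := by field_simp
  linarith [show (0 : ℝ) ≤ b / m by positivity]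

lemma containerWeight_completionContainers_le (h : IsLogScale n m) (hC : #C ≤ g * n ^ 20)
    (hgn : n ^ 30 ≤ g) (hgb : g ≤ 5 * n * b) (hFb : 16 * (g - #F) < (b : ℝ) / m) :
    containerWeight n (completionContainers j g b C F) ≤ (2 : ℝ) ^ ((g : ℝ) - b / (150 * m)) := by
  have hm := h.one_le_right
  have hsize : ∀ X ∈ completionContainers j g b C F, (#X : ℝ) ≤ g - b := fun X hX ↦ by
    rw [le_sub_iff_add_le]
    exact_mod_cast (mem_filter.mp hX).2
  refine (containerWeight_le hsize (card_completionContainers_le h hC)).trans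
    (Real.rpow_le_rpow_of_exponent_le one_le_two ?_)
  have herror := container_error_le h hgn hgb
  set ε : ℝ := 1 / (n : ℝ) ^ 3
  have hεb : 0 ≤ ε * b := by positivity
  have hmℓ : (m : ℝ) * (g - #F) ≤ b / 16 := by
    rw [lt_div_iff₀ (by positivity)] at hFb
    linarith
  have hbm : (b : ℝ) / (150 * m) = 1 / 150 * (b / m) := by field_simp
  have hbb : (b : ℝ) / m ≤ b := div_le_self (by positivity) hm
  linarith [sq_nonneg (n : ℝ), show (0 : ℝ) ≤ b / m by positivity]

lemma exists_containers_of_core (h : IsLogScale n m) (hj : n ≤ 2 * j + 1) (hC : #C ≤ g * n ^ 20)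
    (hgn : n ^ 30 ≤ g) (hgb : g ≤ 5 * n * b) (F : Finset (Finset (Fin n))) :
    ∃ 𝒳 : Finset (Finset (Finset (Fin n))),
      containerWeight n 𝒳 ≤ (2 : ℝ) ^ ((g : ℝ) - b / (150 * m)) ∧
      (∀ X ∈ 𝒳, (X : Set (Finset (Fin n))).Sized (j + 1)) ∧
      ∀ A, HasShadowProfile j g b C A → IsCore m j F (∂ A) → ∃ X ∈ 𝒳, A ⊆ X := by
  rcases lt_or_ge g #F with hgF | hFg
  · refine ⟨∅, by simp only [containerWeight, sum_empty]; positivity, by simp, fun A hA hF ↦ ?_⟩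
    exact absurd (hA.card_shadow ▸ card_le_card hF.subset) hgF.not_ge
  rcases le_or_gt ((b : ℝ) / m) (16 * (g - #F)) with hFb | hFb
  · obtain ⟨Ψ, hΨ, hΨj, hΨA⟩ :=
      exists_isDownMatching_family (α := Fin n) (j := j) (by simpa using hj)
    rw [Fintype.card_fin] at hΨ
    exact ⟨_, containerWeight_matchingContainers_le h hj hΨ hΨj hC hgn hgb
      (by exact_mod_cast hFg) hFb, fun X ↦ sized_of_mem_matchingContainers,
      fun A ↦ exists_mem_matchingContainers h.one_le hΨj hΨA⟩
  · exact ⟨_, containerWeight_completionContainers_le h hC hgn hgb hFb,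
      fun X ↦ sized_of_mem_completionContainers,
      fun A hA hF ↦ exists_mem_completionContainers hA hF.subset⟩

lemma exists_containers (h : IsLogScale n m) (hj : n ≤ 2 * j + 1)
    (hCj : (C : Set (Finset (Fin n))).Sized j) (hC : #C ≤ g * n ^ 20)
    (hgn : n ^ 30 ≤ g) (hgb : g ≤ 5 * n * b) :
    ∃ 𝒳 : Finset (Finset (Finset (Fin n))),
      containerWeight n 𝒳 ≤ (2 : ℝ) ^ ((g : ℝ) - b / (200 * m)) ∧
      (∀ X ∈ 𝒳, (X : Set (Finset (Fin n))).Sized (j + 1)) ∧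
      ∀ A, HasShadowProfile j g b C A → ∃ X ∈ 𝒳, A ⊆ X := by
  have hm := h.one_le_right
  choose 𝒳 hweight hsized hcover using exists_containers_of_core h hj hC hgn hgb
  refine ⟨(coreCandidates m g b C).biUnion 𝒳, ?_, fun X hX ↦ ?_, fun A hA ↦ ?_⟩
  · calc
      containerWeight n ((coreCandidates m g b C).biUnion 𝒳)
        ≤ ∑ F ∈ coreCandidates m g b C, containerWeight n (𝒳 F) := containerWeight_biUnion_le ..
      _ ≤ #(coreCandidates m g b C) • (2 : ℝ) ^ ((g : ℝ) - b / (150 * m)) :=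
        sum_le_card_nsmul _ _ _ fun F _ ↦ hweight F
      _ ≤ (2 : ℝ) ^ ((b : ℝ) / (1000 * m)) * (2 : ℝ) ^ ((g : ℝ) - b / (150 * m)) := by
        rw [nsmul_eq_mul]
        gcongr
        exact card_coreCandidates_le h hC hgb
      _ ≤ (2 : ℝ) ^ ((g : ℝ) - b / (200 * m)) := by
        rw [← Real.rpow_add two_pos]
        refine Real.rpow_le_rpow_of_exponent_le one_le_two ?_
        have hscale (k : ℝ) : (b : ℝ) / (k * m) = b / m / k := by rw [mul_comm, div_div]
        rw [hscale, hscale, hscale]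
        linarith [(by positivity : (0 : ℝ) ≤ b / m)]
  · obtain ⟨F, -, hX⟩ := mem_biUnion.mp hX
    exact hsized F X hX
  · obtain ⟨F, hF, hcore⟩ := exists_isCore_mem_coreCandidates h hj hCj hA.shadow_subset
      hA.card_shadow hA.card_completeSets hgn hgb
    obtain ⟨X, hX, hAX⟩ := hcover F A hA hcore
    exact ⟨X, mem_biUnion.mpr ⟨F, hF, hX⟩, hAX⟩

end Containers

/-! ### Truncated lower sets -/

section TruncatedLowerSets

variable {α : Type*} {i j : ℕ} {V W : Finset (Finset α)} {x : Finset α}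

/-- A family of sets of size at least `j` that is closed under passing to subsets of size at least
`j`: what is left of a lower set after all its members of size less than `j` are forgotten. -/
structure IsTruncatedLowerSet (j : ℕ) (V : Finset (Finset α)) : Prop where
  le_card : ∀ x ∈ V, j ≤ #x
  mem_of_subset : ∀ x ∈ V, ∀ y ⊆ x, j ≤ #y → y ∈ V

/-- The members of `V` of size at least `j`. -/
def truncate (j : ℕ) (V : Finset (Finset α)) : Finset (Finset α) := {x ∈ V | j ≤ #x}

lemma mem_truncate : x ∈ truncate j V ↔ x ∈ V ∧ j ≤ #x := mem_filter

lemma IsTruncatedLowerSet.truncate (hV : IsTruncatedLowerSet i V) (hij : i ≤ j) :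
    IsTruncatedLowerSet j (truncate j V) where
  le_card _ hx := (mem_truncate.mp hx).2
  mem_of_subset x hx y hy hyj :=
    mem_truncate.mpr ⟨hV.mem_of_subset x (mem_truncate.mp hx).1 y hy (hij.trans hyj), hyj⟩

lemma slice_truncate (hij : i ≤ j) (V : Finset (Finset α)) : (truncate i V) # j = V # j := by
  ext x
  rw [mem_slice, mem_slice, mem_truncate]
  exact ⟨fun h ↦ ⟨h.1.1, h.2⟩, fun h ↦ ⟨⟨h.1, h.2.symm ▸ hij⟩, h.2⟩⟩

variable [DecidableEq α]

lemma IsTruncatedLowerSet.shadow_slice_subset (hV : IsTruncatedLowerSet i V) (hij : i ≤ j) :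
    ∂ (V # (j + 1)) ⊆ V # j := by
  intro c hc
  obtain ⟨x, hx, hcx, hcj⟩ := (mem_shadow_iff_of_sized sized_slice).mp hc
  exact mem_slice.mpr
    ⟨hV.mem_of_subset x (mem_slice.mp hx).1 c hcx (hcj.symm ▸ hij), hcj⟩

lemma IsTruncatedLowerSet.slice_union_truncate (hV : IsTruncatedLowerSet j V) :
    V # j ∪ UniformComplex.truncate (j + 1) V = V := by
  ext x
  rw [mem_union, mem_slice, mem_truncate]
  refine ⟨by rintro (h | h) <;> exact h.1, fun hx ↦ ?_⟩
  rcases (hV.le_card x hx).eq_or_lt with h | h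
  · exact Or.inl ⟨hx, h.symm⟩
  · exact Or.inr ⟨hx, h⟩

lemma eq_of_truncate_eq_of_slice_sdiff_eq {V' : Finset (Finset α)} (hV : IsTruncatedLowerSet j V)
    (hV' : IsTruncatedLowerSet j V') (ht : truncate (j + 1) V = truncate (j + 1) V')
    (hs : V # j \ ∂ (V # (j + 1)) = V' # j \ ∂ (V' # (j + 1))) : V = V' := by
  have hslice : V # (j + 1) = V' # (j + 1) := by
    rw [← slice_truncate le_rfl V, ht, slice_truncate le_rfl]
  rw [← hV.slice_union_truncate, ← hV'.slice_union_truncate, ht,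
    ← sdiff_union_of_subset (hV.shadow_slice_subset le_rfl),
    ← sdiff_union_of_subset (hV'.shadow_slice_subset le_rfl), hs, hslice]

variable [Fintype α] {C : Finset (Finset α)}

/-- The truncated lower sets whose bottom layer, the one of size `j`, is contained in `C`. -/
def lowerSetsOver (j : ℕ) (C : Finset (Finset α)) : Finset (Finset (Finset α)) :=
  {V | IsTruncatedLowerSet j V ∧ V # j ⊆ C}

lemma mem_lowerSetsOver : V ∈ lowerSetsOver j C ↔ IsTruncatedLowerSet j V ∧ V # j ⊆ C := by
  simp [lowerSetsOver]

lemma truncate_mem_lowerSetsOver (hV : V ∈ lowerSetsOver j C) :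
    truncate (j + 1) V ∈ lowerSetsOver (j + 1) (completeSets j C) := by
  obtain ⟨hV, hVC⟩ := mem_lowerSetsOver.mp hV
  refine mem_lowerSetsOver.mpr ⟨hV.truncate (j.le_add_right 1), ?_⟩
  rw [slice_truncate le_rfl, subset_completeSets_iff sized_slice]
  exact (hV.shadow_slice_subset le_rfl).trans hVC

lemma shadow_slice_subset_of_mem_lowerSetsOver
    (hW : W ∈ lowerSetsOver (j + 1) (completeSets j C)) : ∂ (W # (j + 1)) ⊆ C :=
  (subset_completeSets_iff sized_slice).mp (mem_lowerSetsOver.mp hW).2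

lemma card_filter_truncate_eq_le (hW : W ∈ lowerSetsOver (j + 1) (completeSets j C)) :
    (#{V ∈ lowerSetsOver j C | truncate (j + 1) V = W} : ℝ) ≤
      (2 : ℝ) ^ ((#C : ℝ) - #(∂ (W # (j + 1)))) := by
  have hWC := shadow_slice_subset_of_mem_lowerSetsOver hW
  have hslice {V : Finset (Finset α)} (hV : truncate (j + 1) V = W) :
      V # (j + 1) = W # (j + 1) := by rw [← hV, slice_truncate le_rfl]
  have hcard : #{V ∈ lowerSetsOver j C | truncate (j + 1) V = W} ≤
      #(C \ ∂ (W # (j + 1))).powerset := by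
    refine card_le_card_of_injOn (fun V ↦ V # j \ ∂ (W # (j + 1))) (fun V hV ↦ ?_)
      fun V hV V' hV' heq ↦ ?_
    · obtain ⟨hV, -⟩ := mem_filter.mp hV
      exact mem_powerset.mpr (sdiff_subset_sdiff (mem_lowerSetsOver.mp hV).2 le_rfl)
    · obtain ⟨hV, ht⟩ := mem_filter.mp hV
      obtain ⟨hV', ht'⟩ := mem_filter.mp hV'
      refine eq_of_truncate_eq_of_slice_sdiff_eq (mem_lowerSetsOver.mp hV).1
        (mem_lowerSetsOver.mp hV').1 (ht.trans ht'.symm) ?_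
      rw [hslice ht, hslice ht']
      exact heq
  rw [card_powerset, card_sdiff_of_subset hWC] at hcard
  rw [← Nat.cast_sub (card_le_card hWC), Real.rpow_natCast]
  exact_mod_cast hcard

lemma card_filter_lowerSetsOver_le (C : Finset (Finset α)) (P : Finset (Finset α) → Prop) :
    (#{V ∈ lowerSetsOver j C | P (V # (j + 1))} : ℝ) ≤
      ∑ W ∈ lowerSetsOver (j + 1) (completeSets j C) with P (W # (j + 1)),
        (2 : ℝ) ^ ((#C : ℝ) - #(∂ (W # (j + 1)))) := by
  have hmaps : ∀ V ∈ {V ∈ lowerSetsOver j C | P (V # (j + 1))}, truncate (j + 1) V ∈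
      {W ∈ lowerSetsOver (j + 1) (completeSets j C) | P (W # (j + 1))} := by
    intro V hV
    obtain ⟨hV, hP⟩ := mem_filter.mp hV
    exact mem_filter.mpr ⟨truncate_mem_lowerSetsOver hV, by rwa [slice_truncate le_rfl]⟩
  rw [card_eq_sum_card_fiberwise hmaps, Nat.cast_sum]
  refine sum_le_sum fun W hW ↦ le_trans ?_ (card_filter_truncate_eq_le (mem_filter.mp hW).1)
  gcongr
  exact filter_subset _ _

lemma card_filter_lowerSetsOver_le_mul (C : Finset (Finset α)) (P : Finset (Finset α) → Prop) :
    (#{V ∈ lowerSetsOver j C | P (V # (j + 1))} : ℝ) ≤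
      #{W ∈ lowerSetsOver (j + 1) (completeSets j C) | P (W # (j + 1))} * (2 : ℝ) ^ (#C : ℝ) := by
  refine (card_filter_lowerSetsOver_le C P).trans ?_
  rw [← nsmul_eq_mul]
  refine sum_le_card_nsmul _ _ _ fun W _ ↦ Real.rpow_le_rpow_of_exponent_le one_le_two ?_
  exact sub_le_self _ (Nat.cast_nonneg _)

lemma card_lowerSetsOver_le_one (hj : Fintype.card α < j) (C : Finset (Finset α)) :
    #(lowerSetsOver j C) ≤ 1 := by
  refine card_le_one_iff_subset_singleton.mpr ⟨∅, fun V hV ↦ mem_singleton.mpr ?_⟩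
  refine eq_empty_of_forall_notMem fun x hx ↦ hj.not_ge ?_
  exact ((mem_lowerSetsOver.mp hV).1.le_card x hx).trans (card_le_univ x)

lemma card_lowerSetsOver_le_two_rpow_mul {k : ℕ} (hjk : j + k = Fintype.card α + 1)
    (hj : Fintype.card α ≤ 2 * j + 1) (C : Finset (Finset α)) :
    (#(lowerSetsOver j C) : ℝ) ≤ (2 : ℝ) ^ ((k : ℝ) * #C) := by
  induction k generalizing j C with
  | zero => simpa using card_lowerSetsOver_le_one (by omega) C
  | succ k ih =>
    have hstep := card_filter_lowerSetsOver_le_mul (j := j) C fun _ ↦ True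
    simp only [filter_true] at hstep
    have hcomplete : (#(completeSets j C) : ℝ) ≤ #C := by
      exact_mod_cast card_completeSets_le hj C
    calc (#(lowerSetsOver j C) : ℝ)
        ≤ #(lowerSetsOver (j + 1) (completeSets j C)) * (2 : ℝ) ^ (#C : ℝ) := hstep
      _ ≤ (2 : ℝ) ^ ((k : ℝ) * #(completeSets j C)) * (2 : ℝ) ^ (#C : ℝ) := by
          gcongr
          exact ih (by omega) (by omega) _
      _ ≤ (2 : ℝ) ^ ((k : ℝ) * #C) * (2 : ℝ) ^ (#C : ℝ) := by
          gcongr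
          exact one_le_two
      _ = (2 : ℝ) ^ (((k + 1 : ℕ) : ℝ) * #C) := by
          rw [← Real.rpow_add two_pos, Nat.cast_succ, add_one_mul]

end TruncatedLowerSets

/-! ### Counting truncated lower sets layer by layer -/

section LayerCounting

variable {n m j g b : ℕ} {E g₀ : ℝ} {A C : Finset (Finset (Fin n))}

/-- The shadow of `A` has noticeably more members than it has complete sets. The gap is measured by
a truncated subtraction, which for `n ≤ 2 * j + 1` is an honest one. -/
def IsDeficient (j : ℕ) (A : Finset (Finset (Fin n))) : Prop :=
  #(∂ A) ≤ 5 * n * (#(∂ A) - #(completeSets j (∂ A)))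

/-- The shadow of `A` is deficient and has at least `g₀` members. Containers make lower sets with
such a layer `A` rare. -/
def IsLargeDeficient (j : ℕ) (g₀ : ℝ) (A : Finset (Finset (Fin n))) : Prop :=
  g₀ ≤ #(∂ A) ∧ IsDeficient j A

/-- A bound on the number of truncated lower sets over any `C` that exceeds the number `2 ^ #C` of
choices for the bottom layer alone only by a small power and a factor `2 ^ E`. -/
def LayerBound (n j : ℕ) (E : ℝ) : Prop :=
  ∀ C : Finset (Finset (Fin n)), (C : Set (Finset (Fin n))).Sized j →
    (#(lowerSetsOver j C) : ℝ) ≤ (2 : ℝ) ^ ((1 + 1 / (n : ℝ) ^ 3) * #C + E)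

lemma isDeficient_of_le_two_mul (hj : n ≤ 2 * j) (hA : (A : Set (Finset (Fin n))).Sized (j + 1)) :
    IsDeficient j A := by
  rcases (∂ A).eq_empty_or_nonempty with hempty | ⟨c, hc⟩
  · simp [IsDeficient, hempty]
  have hjn : j + 1 ≤ n := by
    obtain ⟨x, hx, -⟩ := (mem_shadow_iff_of_sized hA).mp hc
    simpa [hA hx] using card_le_univ x
  have hlym : #(completeSets j (∂ A)) * (j + 1) ≤ #(∂ A) * j :=
    (local_lubell_yamamoto_meshalkin_inequality_mul sized_completeSets).trans
      (Nat.mul_le_mul (card_le_card shadow_completeSets_subset) (by rw [Fintype.card_fin]; omega))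
  obtain ⟨b, hb⟩ := Nat.exists_eq_add_of_le
    (card_completeSets_le (by rw [Fintype.card_fin]; omega) (∂ A) :
      #(completeSets j (∂ A)) ≤ #(∂ A))
  rw [IsDeficient, hb, Nat.add_sub_cancel_left]
  rw [hb] at hlym
  nlinarith

lemma card_filter_hasShadowProfile_le (h : IsLogScale n m) (hj : n ≤ 2 * j + 1)
    (hE : LayerBound n (j + 1) E) (hCj : (C : Set (Finset (Fin n))).Sized j)
    (hC : #C ≤ g * n ^ 20) (hgn : n ^ 30 ≤ g) (hgb : g ≤ 5 * n * b) :
    (#{W ∈ lowerSetsOver (j + 1) (completeSets j C) | HasShadowProfile j g b C (W # (j + 1))} : ℝ) ≤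
      (2 : ℝ) ^ (E + ((g : ℝ) - b / (200 * m))) := by
  obtain ⟨𝒳, hweight, hsized, hcover⟩ := exists_containers h hj hCj hC hgn hgb
  have hsub : {W ∈ lowerSetsOver (j + 1) (completeSets j C) |
      HasShadowProfile j g b C (W # (j + 1))} ⊆ 𝒳.biUnion (lowerSetsOver (j + 1)) := by
    intro W hW
    obtain ⟨hW, hprofile⟩ := mem_filter.mp hW
    obtain ⟨X, hX, hWX⟩ := hcover _ hprofile
    exact mem_biUnion.mpr ⟨X, hX, mem_lowerSetsOver.mpr ⟨(mem_lowerSetsOver.mp hW).1, hWX⟩⟩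
  calc (#{W ∈ lowerSetsOver (j + 1) (completeSets j C) |
        HasShadowProfile j g b C (W # (j + 1))} : ℝ)
      ≤ ∑ X ∈ 𝒳, (#(lowerSetsOver (j + 1) X) : ℝ) :=
        mod_cast (card_le_card hsub).trans card_biUnion_le
    _ ≤ ∑ X ∈ 𝒳, (2 : ℝ) ^ ((1 + 1 / (n : ℝ) ^ 3) * #X + E) :=
        sum_le_sum fun X hX ↦ hE X (hsized X hX)
    _ = (2 : ℝ) ^ E * containerWeight n 𝒳 := by
        rw [containerWeight, mul_sum]
        exact sum_congr rfl fun X _ ↦ by rw [add_comm, Real.rpow_add two_pos]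
    _ ≤ (2 : ℝ) ^ (E + ((g : ℝ) - b / (200 * m))) := by
        rw [Real.rpow_add two_pos]
        gcongr

lemma sum_le_sq_mul_of_fiber_le {ι : Type*} {S : Finset ι} {u v : ι → ℕ} {M : ℕ} {w : ι → ℝ} {q : ℝ}
    (hu : ∀ a ∈ S, u a ≤ M) (hv : ∀ a ∈ S, v a ≤ M)
    (hq : ∀ g b, ∑ a ∈ S with u a = g ∧ v a = b, w a ≤ q) :
    ∑ a ∈ S, w a ≤ ((M : ℝ) + 1) ^ 2 * q := by
  have hmaps : ∀ a ∈ S, (u a, v a) ∈ range (M + 1) ×ˢ range (M + 1) := fun a ha ↦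
    mem_product.mpr
      ⟨mem_range_succ_iff.mpr (hu a ha), mem_range_succ_iff.mpr (hv a ha)⟩
  rw [← sum_fiberwise_of_maps_to hmaps w]
  calc ∑ p ∈ range (M + 1) ×ˢ range (M + 1), ∑ a ∈ S with (u a, v a) = p, w a
      ≤ #(range (M + 1) ×ˢ range (M + 1)) • q := by
        refine sum_le_card_nsmul _ _ _ fun p _ ↦ ?_
        simpa only [Prod.ext_iff] using hq p.1 p.2
    _ = ((M : ℝ) + 1) ^ 2 * q := by
        rw [nsmul_eq_mul, card_product, card_range]
        push_cast
        ring

lemma card_add_one_sq_le (C : Finset (Finset (Fin n))) :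
    ((#C : ℝ) + 1) ^ 2 ≤ (2 : ℝ) ^ (2 * ((n : ℝ) + 1)) := by
  have hC : (#C : ℝ) ≤ 2 ^ n := by exact_mod_cast (card_le_univ C).trans_eq (by simp)
  have hone : (1 : ℝ) ≤ 2 ^ n := one_le_pow₀ one_le_two
  calc ((#C : ℝ) + 1) ^ 2 ≤ (2 ^ (n + 1)) ^ 2 := by
        gcongr
        rw [pow_succ]
        linarith
    _ = (2 : ℝ) ^ (2 * ((n : ℝ) + 1)) := by
        rw [← pow_mul, ← Real.rpow_natCast]
        push_cast
        ring_nf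

lemma two_mul_add_div_pow_three_le (h : IsLogScale n m) (hg₀ : (n : ℝ) ^ 30 ≤ g₀) :
    2 * ((n : ℝ) + 1) + g₀ / n ^ 3 ≤ g₀ / (1000 * n * m) := by
  have hn : (10 : ℝ) ^ 8 ≤ n := h.le_left_real
  have hn₀ : (0 : ℝ) < n := by linarith
  have hm : (0 : ℝ) < m := by exact_mod_cast h.one_le
  have hmn : (10 : ℝ) ^ 8 * m ^ 1 ≤ n := h.mul_pow_le_real (by norm_num)
  have hpos : 0 < g₀ := lt_of_lt_of_le (by positivity) hg₀
  have hdiv : 2 * (g₀ / n ^ 2) ≤ g₀ / (1000 * n * m) := by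
    rw [le_div_iff₀ (by positivity)]
    calc 2 * (g₀ / n ^ 2) * (1000 * n * m) = 2 * (1000 * (m : ℝ)) * g₀ / n := by field_simp
      _ ≤ n * g₀ / n := by gcongr; linarith
      _ = g₀ := by field_simp
  have hcube : g₀ / n ^ 3 ≤ g₀ / n ^ 2 := by
    gcongr
    · linarith
    · norm_num
  have hlin : 2 * ((n : ℝ) + 1) ≤ g₀ / n ^ 2 := by
    rw [le_div_iff₀ (by positivity)]
    calc 2 * ((n : ℝ) + 1) * n ^ 2 ≤ n * n * n ^ 2 :=
          mul_le_mul_of_nonneg_right (by nlinarith) (by positivity)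
      _ = (n : ℝ) ^ 4 := by ring
      _ ≤ (n : ℝ) ^ 30 := pow_le_pow_right₀ (by linarith) (by norm_num)
      _ ≤ g₀ := hg₀
  linarith

lemma sum_hasShadowProfile_le (h : IsLogScale n m) (hj : n ≤ 2 * j + 1)
    (hE : LayerBound n (j + 1) E) (hCj : (C : Set (Finset (Fin n))).Sized j)
    (hC : (#C : ℝ) ≤ g₀ * n ^ 20) (hg₀ : (n : ℝ) ^ 30 ≤ g₀) (hg : g₀ ≤ g) (hgb : g ≤ 5 * n * b) :
    ∑ W ∈ lowerSetsOver (j + 1) (completeSets j C) with HasShadowProfile j g b C (W # (j + 1)),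
        (2 : ℝ) ^ ((#C : ℝ) - #(∂ (W # (j + 1)))) ≤
      (2 : ℝ) ^ ((#C : ℝ) + E - g₀ / (1000 * n * m)) := by
  have hn₀ : (0 : ℝ) < n := by exact_mod_cast h.left_pos
  have hm : (0 : ℝ) < m := by exact_mod_cast h.one_le
  have hC' : #C ≤ g * n ^ 20 := by
    have : (#C : ℝ) ≤ g * n ^ 20 := hC.trans (by gcongr)
    exact_mod_cast this
  have hcount := card_filter_hasShadowProfile_le h hj hE hCj hC'
    (by exact_mod_cast hg₀.trans hg) hgb
  have hdeficit : g₀ / (1000 * n * m) ≤ b / (200 * m) := by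
    rw [div_le_div_iff₀ (by positivity) (by positivity)]
    have hgb' : (g : ℝ) ≤ 5 * n * b := by exact_mod_cast hgb
    calc g₀ * (200 * m) ≤ 5 * n * b * (200 * m) := by gcongr; exact hg.trans hgb'
      _ = b * (1000 * n * m) := by ring
  calc ∑ W ∈ lowerSetsOver (j + 1) (completeSets j C) with HasShadowProfile j g b C (W # (j + 1)),
        (2 : ℝ) ^ ((#C : ℝ) - #(∂ (W # (j + 1))))
      = #{W ∈ lowerSetsOver (j + 1) (completeSets j C) |
          HasShadowProfile j g b C (W # (j + 1))} * (2 : ℝ) ^ ((#C : ℝ) - g) := by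
        rw [← nsmul_eq_mul]
        exact sum_eq_card_nsmul fun W hW ↦ by rw [(mem_filter.mp hW).2.card_shadow]
    _ ≤ (2 : ℝ) ^ (E + ((g : ℝ) - b / (200 * m))) * (2 : ℝ) ^ ((#C : ℝ) - g) := by gcongr
    _ ≤ (2 : ℝ) ^ ((#C : ℝ) + E - g₀ / (1000 * n * m)) := by
        rw [← Real.rpow_add two_pos]
        exact Real.rpow_le_rpow_of_exponent_le one_le_two (by linarith)

lemma card_filter_isLargeDeficient_le (h : IsLogScale n m) (hj : n ≤ 2 * j + 1)
    (hE : LayerBound n (j + 1) E) (hCj : (C : Set (Finset (Fin n))).Sized j)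
    (hC : (#C : ℝ) ≤ g₀ * n ^ 20) (hg₀ : (n : ℝ) ^ 30 ≤ g₀) :
    (#{V ∈ lowerSetsOver j C | IsLargeDeficient j g₀ (V # (j + 1))} : ℝ) ≤
      (2 : ℝ) ^ ((#C : ℝ) + E - g₀ / n ^ 3) := by
  set S := {W ∈ lowerSetsOver (j + 1) (completeSets j C) | IsLargeDeficient j g₀ (W # (j + 1))}
  have hshadow : ∀ W ∈ S, ∂ (W # (j + 1)) ⊆ C := fun W hW ↦
    shadow_slice_subset_of_mem_lowerSetsOver (mem_filter.mp hW).1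
  have hfiber (g b : ℕ) : ∑ W ∈ S with #(∂ (W # (j + 1))) = g ∧
      #(∂ (W # (j + 1))) - #(completeSets j (∂ (W # (j + 1)))) = b,
      (2 : ℝ) ^ ((#C : ℝ) - #(∂ (W # (j + 1)))) ≤
        (2 : ℝ) ^ ((#C : ℝ) + E - g₀ / (1000 * n * m)) := by
    by_cases hgb : g₀ ≤ g ∧ g ≤ 5 * n * b
    · refine le_trans (sum_le_sum_of_subset_of_nonneg (fun W hW ↦ ?_) fun _ _ _ ↦ by positivity)
        (sum_hasShadowProfile_le h hj hE hCj hC hg₀ hgb.1 hgb.2)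
      obtain ⟨hWS, rfl, rfl⟩ := mem_filter.mp hW
      exact mem_filter.mpr ⟨(mem_filter.mp hWS).1, sized_slice, hshadow W hWS, rfl,
        Nat.add_sub_cancel' (card_completeSets_le (by rwa [Fintype.card_fin]) _)⟩
    · rw [filter_false_of_mem, sum_empty]
      · positivity
      · rintro W hW ⟨rfl, rfl⟩
        exact hgb (mem_filter.mp hW).2
  calc (#{V ∈ lowerSetsOver j C | IsLargeDeficient j g₀ (V # (j + 1))} : ℝ)
      ≤ ∑ W ∈ S, (2 : ℝ) ^ ((#C : ℝ) - #(∂ (W # (j + 1)))) :=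
        card_filter_lowerSetsOver_le C (IsLargeDeficient j g₀)
    _ ≤ ((#C : ℝ) + 1) ^ 2 * (2 : ℝ) ^ ((#C : ℝ) + E - g₀ / (1000 * n * m)) :=
        sum_le_sq_mul_of_fiber_le (fun W hW ↦ card_le_card (hshadow W hW))
          (fun W hW ↦ (Nat.sub_le _ _).trans (card_le_card (hshadow W hW))) hfiber
    _ ≤ (2 : ℝ) ^ (2 * ((n : ℝ) + 1)) * (2 : ℝ) ^ ((#C : ℝ) + E - g₀ / (1000 * n * m)) := by
        gcongr
        exact card_add_one_sq_le C
    _ ≤ (2 : ℝ) ^ ((#C : ℝ) + E - g₀ / n ^ 3) := by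
        rw [← Real.rpow_add two_pos]
        refine Real.rpow_le_rpow_of_exponent_le one_le_two ?_
        linarith [two_mul_add_div_pow_three_le h hg₀]

lemma card_lowerSetsOver_le_of_card_le (hE : LayerBound n j E) (hn : 0 < n)
    (hC : (C : Set (Finset (Fin n))).Sized j) (hg₀ : (#C : ℝ) ≤ g₀) :
    (#(lowerSetsOver j C) : ℝ) ≤ (2 : ℝ) ^ (2 * g₀ + E) := by
  refine (hE C hC).trans (Real.rpow_le_rpow_of_exponent_le one_le_two ?_)
  have hn' : 1 / (n : ℝ) ^ 3 ≤ 1 :=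
    div_le_one_of_le₀ (one_le_pow₀ (by exact_mod_cast hn)) (by positivity)
  nlinarith [(Nat.cast_nonneg #C : (0 : ℝ) ≤ #C)]

lemma card_filter_card_shadow_lt_le (h : IsLogScale n m) (hj : n ≤ 2 * j + 1)
    (hE : LayerBound n (j + 1) E) (C : Finset (Finset (Fin n))) (g₀ : ℝ) :
    (#{V ∈ lowerSetsOver j C | (#(∂ (V # (j + 1))) : ℝ) < g₀} : ℝ) ≤
      (2 : ℝ) ^ ((#C : ℝ) + (m * g₀ + 2 * (#C / n ^ 50)) + (2 * g₀ + E)) := by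
  have hj' : Fintype.card (Fin n) ≤ 2 * j + 1 := by rwa [Fintype.card_fin]
  set S := {W ∈ lowerSetsOver (j + 1) (completeSets j C) | (#(∂ (W # (j + 1))) : ℝ) < g₀}
  have hsub : S ⊆ (subsetsCardLE (completeSets j C) g₀).biUnion (lowerSetsOver (j + 1)) := by
    intro W hW
    obtain ⟨hW, hlt⟩ := mem_filter.mp hW
    obtain ⟨hW, hWC⟩ := mem_lowerSetsOver.mp hW
    have hshadow : (#(W # (j + 1)) : ℝ) ≤ #(∂ (W # (j + 1))) := by
      exact_mod_cast card_le_card_shadow hj' sized_slice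
    exact mem_biUnion.mpr ⟨W # (j + 1), mem_subsetsCardLE.mpr ⟨hWC, hshadow.trans hlt.le⟩,
      mem_lowerSetsOver.mpr ⟨hW, subset_rfl⟩⟩
  have hsubsets := card_subsetsCardLE_le (completeSets j C) g₀
    (h.le_div_pow_mul (g := #C) (k := 50) le_rfl
      ((card_completeSets_le hj' C).trans_eq (by simp)))
  calc (#{V ∈ lowerSetsOver j C | (#(∂ (V # (j + 1))) : ℝ) < g₀} : ℝ)
      ≤ #S * (2 : ℝ) ^ (#C : ℝ) :=
        card_filter_lowerSetsOver_le_mul C fun A ↦ (#(∂ A) : ℝ) < g₀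
    _ ≤ (∑ B ∈ subsetsCardLE (completeSets j C) g₀, (#(lowerSetsOver (j + 1) B) : ℝ)) *
          (2 : ℝ) ^ (#C : ℝ) := by
        gcongr
        exact_mod_cast (card_le_card hsub).trans card_biUnion_le
    _ ≤ #(subsetsCardLE (completeSets j C) g₀) • (2 : ℝ) ^ (2 * g₀ + E) * (2 : ℝ) ^ (#C : ℝ) := by
        gcongr
        refine sum_le_card_nsmul _ _ _ fun B hB ↦ ?_
        obtain ⟨hB, hcard⟩ := mem_subsetsCardLE.mp hB
        exact card_lowerSetsOver_le_of_card_le hE (by exact_mod_cast h.left_pos)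
          (fun x hx ↦ sized_completeSets (hB hx)) hcard
    _ ≤ (2 : ℝ) ^ (m * g₀ + 2 * (#C / n ^ 50)) * (2 : ℝ) ^ (2 * g₀ + E) * (2 : ℝ) ^ (#C : ℝ) := by
        rw [nsmul_eq_mul]
        gcongr
    _ = (2 : ℝ) ^ ((#C : ℝ) + (m * g₀ + 2 * (#C / n ^ 50)) + (2 * g₀ + E)) := by
        rw [← Real.rpow_add two_pos, ← Real.rpow_add two_pos]
        ring_nf

lemma card_lowerSetsOver_le_of_mul_pow_le {N : ℝ} (hn : 0 < n) (hj : n ≤ 2 * j) (hjn : j ≤ n)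
    (hC : (#C : ℝ) * n ^ 41 ≤ N) :
    (#(lowerSetsOver j C) : ℝ) ≤ (2 : ℝ) ^ ((1 + 1 / (n : ℝ) ^ 3) * #C + N / n ^ 40) := by
  obtain ⟨k, hk⟩ := Nat.exists_eq_add_of_le (hjn.trans n.le_succ)
  refine (card_lowerSetsOver_le_two_rpow_mul (k := k) (by rw [Fintype.card_fin]; exact hk.symm)
    (by rw [Fintype.card_fin]; omega) C).trans (Real.rpow_le_rpow_of_exponent_le one_le_two ?_)
  have hkn : (k : ℝ) ≤ n := by exact_mod_cast (by omega : k ≤ n)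
  calc (k : ℝ) * #C ≤ n * #C := by gcongr
    _ ≤ N / n ^ 40 := by
        rw [le_div_iff₀ (by positivity)]
        exact (by ring : (n : ℝ) * #C * n ^ 40 = #C * n ^ 41).trans_le hC
    _ ≤ (1 + 1 / (n : ℝ) ^ 3) * #C + N / n ^ 40 := le_add_of_nonneg_left (by positivity)

lemma small_shadow_exponent_le (h : IsLogScale n m) {c : ℝ} (hc : 0 ≤ c) :
    m * (c / (n : ℝ) ^ 20) + 2 * (c / n ^ 50) + 2 * (c / n ^ 20) ≤ c / n ^ 3 / 2 := by
  have hn : (10 : ℝ) ^ 8 ≤ n := h.le_left_real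
  have hn₀ : (0 : ℝ) < n := by linarith
  have hmn : (m : ℝ) ≤ n := by
    linarith [h.mul_pow_le_real (k := 1) (by norm_num), (m.cast_nonneg : (0 : ℝ) ≤ m)]
  set u := c / (n : ℝ) ^ 20 with hu
  have hu₀ : 0 ≤ u := by positivity
  have hfifty : c / (n : ℝ) ^ 50 ≤ u := by
    rw [hu]
    gcongr
    · linarith
    · norm_num
  have hcube : (n : ℝ) ^ 2 * u ≤ c / n ^ 3 := by
    rw [hu, le_div_iff₀ (by positivity)]
    calc (n : ℝ) ^ 2 * (c / n ^ 20) * n ^ 3 = c / n ^ 15 := by field_simp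
      _ ≤ c := div_le_self hc (one_le_pow₀ (by linarith))
  have hsq : ((n : ℝ) + 4) * 2 * u ≤ n ^ 2 * u := by gcongr; nlinarith
  have hmul : m * u ≤ n * u := by gcongr
  linarith

lemma lowerSetsOver_subset_union (hj : n ≤ 2 * j) (C : Finset (Finset (Fin n))) (g₀ : ℝ) :
    lowerSetsOver j C ⊆ {V ∈ lowerSetsOver j C | (#(∂ (V # (j + 1))) : ℝ) < g₀} ∪
      {V ∈ lowerSetsOver j C | IsLargeDeficient j g₀ (V # (j + 1))} := by
  intro V hV
  rcases lt_or_ge (#(∂ (V # (j + 1))) : ℝ) g₀ with hlt | hge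
  · exact mem_union_left _ (mem_filter.mpr ⟨hV, hlt⟩)
  · exact mem_union_right _
      (mem_filter.mpr ⟨hV, hge, isDeficient_of_le_two_mul hj sized_slice⟩)

lemma card_lowerSetsOver_le_of_pow_le_card (h : IsLogScale n m) (hj : n ≤ 2 * j)
    (hE : LayerBound n (j + 1) E) (hCj : (C : Set (Finset (Fin n))).Sized j)
    (hC : (n : ℝ) ^ 50 ≤ #C) :
    (#(lowerSetsOver j C) : ℝ) ≤ (2 : ℝ) ^ ((1 + 1 / (n : ℝ) ^ 3) * #C + E) := by
  have hn : (10 : ℝ) ^ 8 ≤ n := h.le_left_real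
  have hn₀ : (0 : ℝ) < n := by linarith
  set c : ℝ := (#C : ℝ) with hc
  have hc₀ : 0 ≤ c := Nat.cast_nonneg _
  set g₀ : ℝ := c / n ^ 20 with hg₀
  have hg : (n : ℝ) ^ 30 ≤ g₀ := by
    rwa [hg₀, le_div_iff₀ (by positivity), ← pow_add]
  have hsmall := card_filter_card_shadow_lt_le h (by omega) hE C g₀
  have hlarge := card_filter_isLargeDeficient_le h (by omega) hE hCj
    (by rw [hg₀, div_mul_cancel₀ _ (by positivity)]) hg
  have hsmall_exp := small_shadow_exponent_le h hc₀
  have hlarge_exp : 0 ≤ g₀ / n ^ 3 := by positivity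
  have hcube : 2 ≤ c / (n : ℝ) ^ 3 := by
    rw [le_div_iff₀ (by positivity)]
    calc 2 * (n : ℝ) ^ 3 ≤ n * n ^ 3 := by gcongr; linarith
      _ = (n : ℝ) ^ 4 := by ring
      _ ≤ (n : ℝ) ^ 50 := pow_le_pow_right₀ (by linarith) (by norm_num)
      _ ≤ c := hC
  calc (#(lowerSetsOver j C) : ℝ)
      ≤ #{V ∈ lowerSetsOver j C | (#(∂ (V # (j + 1))) : ℝ) < g₀} +
          #{V ∈ lowerSetsOver j C | IsLargeDeficient j g₀ (V # (j + 1))} := by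
        exact_mod_cast (card_le_card (lowerSetsOver_subset_union hj C g₀)).trans (card_union_le _ _)
    _ ≤ (2 : ℝ) ^ (c + E + c / n ^ 3 / 2) + (2 : ℝ) ^ (c + E + c / n ^ 3 / 2) := by
        refine add_le_add (hsmall.trans ?_) (hlarge.trans ?_) <;>
          exact Real.rpow_le_rpow_of_exponent_le one_le_two (by linarith)
    _ = (2 : ℝ) ^ (c + E + c / n ^ 3 / 2 + 1) := by rw [Real.rpow_add_one two_ne_zero]; ring
    _ ≤ (2 : ℝ) ^ ((1 + 1 / (n : ℝ) ^ 3) * c + E) := by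
        refine Real.rpow_le_rpow_of_exponent_le one_le_two ?_
        linarith [(by ring : (1 + 1 / (n : ℝ) ^ 3) * c = c + c / n ^ 3)]

lemma layerBound_of_lt (hj : n < j) (hE : 0 ≤ E) : LayerBound n j E := by
  intro C _
  have hone : (#(lowerSetsOver j C) : ℝ) ≤ 1 := by
    exact_mod_cast card_lowerSetsOver_le_one (by rwa [Fintype.card_fin]) C
  exact hone.trans (Real.one_le_rpow one_le_two (by positivity))

lemma layerBound_of_le_two_mul {N : ℝ} (h : IsLogScale n m) (hN : (n : ℝ) ^ 100 ≤ N)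
    (hj : n ≤ 2 * j) : LayerBound n j (N / n ^ 40) := by
  have hn₀ : (0 : ℝ) < n := by exact_mod_cast h.left_pos
  have hN₀ : 0 ≤ N := le_trans (by positivity) hN
  obtain ⟨k, hk⟩ : ∃ k, n < j + k := ⟨n + 1, by omega⟩
  induction k generalizing j with
  | zero => exact layerBound_of_lt hk (by positivity)
  | succ k ih =>
    rcases lt_or_ge n j with hnj | hjn
    · exact layerBound_of_lt hnj (by positivity)
    intro C hCj
    rcases le_or_gt ((#C : ℝ) * n ^ 41) N with hsmall | hlarge
    · exact card_lowerSetsOver_le_of_mul_pow_le (by exact_mod_cast h.left_pos) hj hjn hsmall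
    · refine card_lowerSetsOver_le_of_pow_le_card h hj (ih (by omega) (by omega)) hCj ?_
      have hpow : (n : ℝ) ^ 59 * n ^ 41 ≤ #C * n ^ 41 := by
        rw [← pow_add]
        exact hN.trans hlarge.le
      calc (n : ℝ) ^ 50 ≤ n ^ 59 :=
            pow_le_pow_right₀ (by exact_mod_cast h.left_pos) (by norm_num)
        _ ≤ #C := le_of_mul_le_mul_right hpow (by positivity)

end LayerCounting

/-! ### Lower sets and their low parts -/

section LowerSets

variable {α : Type*} {j : ℕ} {L T V : Finset (Finset α)} {c x : Finset α}

lemma isTruncatedLowerSet_zero_iff : IsTruncatedLowerSet 0 V ↔ IsLowerSet (V : Set (Finset α)) :=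
  ⟨fun hV x y hyx hx ↦ hV.mem_of_subset x hx y hyx (Nat.zero_le _),
    fun hV ↦ ⟨fun _ _ ↦ Nat.zero_le _, fun _ hx _ hyx _ ↦ hV hyx hx⟩⟩

/-- The members of `V` of size less than `j`. -/
def lowPart (j : ℕ) (V : Finset (Finset α)) : Finset (Finset α) := {x ∈ V | #x < j}

lemma mem_lowPart : x ∈ lowPart j V ↔ x ∈ V ∧ #x < j := mem_filter

lemma lowPart_union_truncate [DecidableEq α] (j : ℕ) (V : Finset (Finset α)) :
    lowPart j V ∪ truncate j V = V := by
  simp_rw [lowPart, truncate, ← not_lt]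
  exact filter_union_filter_not_eq _ V

lemma isLowerSet_lowPart (hV : IsLowerSet (V : Set (Finset α))) :
    IsLowerSet (lowPart j V : Set (Finset α)) := by
  intro x y hyx hx
  obtain ⟨hx, hxj⟩ := mem_lowPart.mp hx
  exact mem_lowPart.mpr ⟨hV hyx hx, (card_le_card hyx).trans_lt hxj⟩

variable [Fintype α]

variable (α) in
/-- All lower sets of subsets of `α`, the empty one included. -/
def lowerSets : Finset (Finset (Finset α)) := {V | IsLowerSet (V : Set (Finset α))}

lemma mem_lowerSets : V ∈ lowerSets α ↔ IsLowerSet (V : Set (Finset α)) := by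
  simp [lowerSets]

variable [DecidableEq α]

/-- The sets of size `j` all of whose proper subsets lie in `L`. -/
def fillableSets (j : ℕ) (L : Finset (Finset α)) : Finset (Finset α) :=
  {c | #c = j ∧ ∀ y ⊂ c, y ∈ L}

lemma mem_fillableSets : c ∈ fillableSets j L ↔ #c = j ∧ ∀ y ⊂ c, y ∈ L := by
  simp [fillableSets]

lemma sized_fillableSets : (fillableSets j L : Set (Finset α)).Sized j :=
  fun _ hc ↦ (mem_fillableSets.mp hc).1

lemma slice_subset_fillableSets_lowPart (hV : IsLowerSet (V : Set (Finset α))) :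
    V # j ⊆ fillableSets j (lowPart j V) := by
  intro c hc
  obtain ⟨hcV, rfl⟩ := mem_slice.mp hc
  exact mem_fillableSets.mpr
    ⟨rfl, fun y hy ↦ mem_lowPart.mpr ⟨hV hy.subset hcV, card_lt_card hy⟩⟩

lemma isLowerSet_union_of_subset_fillableSets (hL : IsLowerSet (L : Set (Finset α)))
    (hT : T ⊆ fillableSets j L) : IsLowerSet ((L ∪ T : Finset (Finset α)) : Set (Finset α)) := by
  intro x y hyx hx
  rcases mem_union.mp hx with hx | hx
  · exact mem_union_left T (hL hyx hx)
  · rcases eq_or_ssubset_of_subset hyx with rfl | hyx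
    · exact mem_union_right L hx
    · exact mem_union_left T ((mem_fillableSets.mp (hT hx)).2 y hyx)

lemma lowPart_union_of_subset_fillableSets (hT : T ⊆ fillableSets j (lowPart j V)) :
    lowPart j (lowPart j V ∪ T) = lowPart j V := by
  ext x
  refine ⟨fun hx ↦ ?_, fun hx ↦ mem_lowPart.mpr ⟨mem_union_left T hx, (mem_lowPart.mp hx).2⟩⟩
  obtain ⟨hx, hxj⟩ := mem_lowPart.mp hx
  refine (mem_union.mp hx).resolve_right fun hxT ↦ hxj.ne (sized_fillableSets (hT hxT))

lemma slice_union_of_subset_fillableSets (hT : T ⊆ fillableSets j (lowPart j V)) :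
    (lowPart j V ∪ T) # j = T := by
  ext x
  refine ⟨fun hx ↦ ?_, fun hx ↦ mem_slice.mpr ⟨mem_union_right _ hx, sized_fillableSets (hT hx)⟩⟩
  obtain ⟨hx, hxj⟩ := mem_slice.mp hx
  exact (mem_union.mp hx).resolve_left fun hxL ↦ (mem_lowPart.mp hxL).2.ne hxj

lemma two_pow_card_fillableSets_le (hV : IsLowerSet (V : Set (Finset α))) :
    2 ^ #(fillableSets j (lowPart j V)) ≤ #{U ∈ lowerSets α | lowPart j U = lowPart j V} := by
  rw [← card_powerset]
  refine card_le_card_of_injOn (lowPart j V ∪ ·) (fun T hT ↦ ?_) fun T hT T' hT' heq ↦ ?_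
  · have hT := mem_powerset.mp hT
    exact mem_filter.mpr ⟨mem_lowerSets.mpr (isLowerSet_union_of_subset_fillableSets
      (isLowerSet_lowPart hV) hT), lowPart_union_of_subset_fillableSets hT⟩
  · rw [← slice_union_of_subset_fillableSets (mem_powerset.mp hT),
      ← slice_union_of_subset_fillableSets (mem_powerset.mp hT')]
    exact congrArg (· # j) heq

lemma card_filter_lowPart_eq_le (P : Finset (Finset α) → Prop) :
    #{V ∈ {V ∈ lowerSets α | P (V # (j + 1))} | lowPart j V = L} ≤
      #{V ∈ lowerSetsOver j (fillableSets j L) | P (V # (j + 1))} := by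
  refine card_le_card_of_injOn (truncate j) (fun V hV ↦ ?_) fun V hV V' hV' heq ↦ ?_
  · obtain ⟨hVP, rfl⟩ := mem_filter.mp hV
    obtain ⟨hmem, hP⟩ := mem_filter.mp hVP
    have hV := mem_lowerSets.mp hmem
    refine mem_filter.mpr ⟨mem_lowerSetsOver.mpr
      ⟨(isTruncatedLowerSet_zero_iff.mpr hV).truncate j.zero_le, ?_⟩, ?_⟩
    · rw [slice_truncate le_rfl]
      exact slice_subset_fillableSets_lowPart hV
    · rwa [slice_truncate (j.le_add_right 1)]
  · rw [← lowPart_union_truncate j V, ← lowPart_union_truncate j V', (mem_filter.mp hV).2,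
      (mem_filter.mp hV').2, heq]

/-- The Alexander dual: the complements of the non-members of `V`. -/
def alexanderDual (V : Finset (Finset α)) : Finset (Finset α) := {x | xᶜ ∉ V}

lemma mem_alexanderDual : x ∈ alexanderDual V ↔ xᶜ ∉ V := by simp [alexanderDual]

lemma alexanderDual_involutive :
    Function.Involutive (alexanderDual : Finset (Finset α) → Finset (Finset α)) := by
  intro V
  ext x
  rw [mem_alexanderDual, mem_alexanderDual, compl_compl, not_not]

lemma isLowerSet_alexanderDual (hV : IsLowerSet (V : Set (Finset α))) :
    IsLowerSet (alexanderDual V : Set (Finset α)) := fun _ _ hyx hx ↦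
  mem_alexanderDual.mpr fun hy ↦ mem_alexanderDual.mp hx (hV (compl_subset_compl.mpr hyx) hy)

lemma card_filter_alexanderDual_le (P : Finset (Finset α) → Prop) :
    #{V ∈ lowerSets α | P (alexanderDual V)} ≤ #{V ∈ lowerSets α | P V} := by
  refine card_le_card_of_injOn alexanderDual (fun V hV ↦ ?_)
    alexanderDual_involutive.injective.injOn
  obtain ⟨hV, hP⟩ := mem_filter.mp hV
  exact mem_filter.mpr ⟨mem_lowerSets.mpr (isLowerSet_alexanderDual (mem_lowerSets.mp hV)), hP⟩

end LowerSets

/-- Fix the part of `V` below size `j`. There are `2 ^ #(fillableSets j (lowPart j V))` lower sets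
with no member above size `j` that have this part, while containers bound the number of those with
a large deficient layer. -/
lemma card_filter_isLargeDeficient_le_mul_card_lowerSets {n m j : ℕ} {E g₀ : ℝ}
    (h : IsLogScale n m) (hj : n ≤ 2 * j + 1) (hE : LayerBound n (j + 1) E)
    (hlayer : ∀ C : Finset (Finset (Fin n)), (C : Set (Finset (Fin n))).Sized j →
      (#C : ℝ) ≤ g₀ * n ^ 20) (hg₀ : (n : ℝ) ^ 30 ≤ g₀) :
    (#{V ∈ lowerSets (Fin n) | IsLargeDeficient j g₀ (V # (j + 1))} : ℝ) ≤
      (2 : ℝ) ^ (E - g₀ / n ^ 3) * #(lowerSets (Fin n)) := by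
  have hmaps : ∀ V ∈ lowerSets (Fin n), lowPart j V ∈ (lowerSets (Fin n)).image (lowPart j) :=
    fun V ↦ mem_image_of_mem _
  rw [card_eq_sum_card_fiberwise hmaps,
    card_eq_sum_card_fiberwise fun V hV ↦ hmaps V (mem_filter.mp hV).1]
  push_cast
  rw [mul_sum]
  refine sum_le_sum fun L hL ↦ ?_
  obtain ⟨V, hV, rfl⟩ := mem_image.mp hL
  set C := fillableSets j (lowPart j V)
  calc (#{U ∈ {U ∈ lowerSets (Fin n) | IsLargeDeficient j g₀ (U # (j + 1))} |
        lowPart j U = lowPart j V} : ℝ)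
      ≤ #{U ∈ lowerSetsOver j C | IsLargeDeficient j g₀ (U # (j + 1))} :=
        mod_cast card_filter_lowPart_eq_le _
    _ ≤ (2 : ℝ) ^ ((#C : ℝ) + E - g₀ / n ^ 3) :=
        card_filter_isLargeDeficient_le h hj hE sized_fillableSets
          (hlayer _ sized_fillableSets) hg₀
    _ = (2 : ℝ) ^ (E - g₀ / n ^ 3) * 2 ^ #C := by
        rw [← Real.rpow_natCast 2 #C, ← Real.rpow_add two_pos]
        ring_nf
    _ ≤ (2 : ℝ) ^ (E - g₀ / n ^ 3) *
          #{U ∈ lowerSets (Fin n) | lowPart j U = lowPart j V} := by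
        gcongr
        exact_mod_cast two_pow_card_fillableSets_le (mem_lowerSets.mp hV)

/-! ### Isolated facets and switching -/

section Switching

variable {n s : ℕ} {Δ Δ' : Finset (Finset (Fin n))} {D F F' y : Finset (Fin n)}

/-- Every `s`-face of `Δ` other than `F` itself meets `F` in at most `s - 2` vertices. -/
def IsIsolated (s : ℕ) (Δ : Finset (Finset (Fin n))) (F : Finset (Fin n)) : Prop :=
  ∀ G ∈ Δ, #G = s → G ≠ F → #(G ∩ F) + 2 ≤ s

lemma IsIsolated.mem_of_insert_subset (hF : IsIsolated s Δ F) (hΔ : IsComplex Δ) (hDF : D ⊆ F)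
    (hDs : #D + 1 = s) {v : Fin n} (hy : y ∈ Δ) (hDy : insert v D ⊆ y) : v ∈ F := by
  by_contra hv
  have hvD : v ∉ D := fun h ↦ hv (hDF h)
  have hle := hF _ (hΔ.2 y hy (insert v D) (insert_nonempty v D) hDy)
    (by rw [card_insert_of_notMem hvD, hDs]) fun h ↦ hv (h ▸ mem_insert_self v D)
  have hge : #D ≤ #(insert v D ∩ F) := card_le_card (subset_inter (subset_insert v D) hDF)
  omega

lemma IsIsolated.isFacet (hF : IsIsolated s Δ F) (hΔ : IsComplex Δ) (hs : 0 < s) (hFΔ : F ∈ Δ)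
    (hFs : #F = s) : IsFacet Δ F := by
  refine ⟨hFΔ, fun y hy hFy ↦ Subset.antisymm (fun v hv ↦ ?_) hFy⟩
  obtain ⟨u, hu⟩ : F.Nonempty := card_pos.mp (hFs ▸ hs)
  exact hF.mem_of_insert_subset hΔ (erase_subset u F) (by rw [card_erase_add_one hu, hFs]) hy
    (insert_subset hv ((erase_subset u F).trans hFy))

lemma IsIsolated.card_inter_add_one_ne (hF : IsIsolated s Δ F) (hΔ : IsComplex Δ)
    {G : Finset (Fin n)} (hG : G ∈ Δ) (hGF : ¬ G ⊆ F) : #(G ∩ F) + 1 ≠ s := by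
  intro hcard
  obtain ⟨v, hvG, hvF⟩ := not_subset.mp hGF
  exact hvF (hF.mem_of_insert_subset hΔ inter_subset_right hcard hG
    (insert_subset hvG inter_subset_left))

/-- Of two isolated facets that meet, the one that comes second in a shelling violates the shelling
condition; two sets of more than `n / 2` vertices do meet. -/
lemma eq_of_isIsolated_of_shellable (hsh : Shellable Δ) (hΔ : IsComplex Δ) (hs : n < 2 * s)
    (hFΔ : F ∈ Δ) (hFs : #F = s) (hF : IsIsolated s Δ F)
    (hFΔ' : F' ∈ Δ) (hFs' : #F' = s) (hF' : IsIsolated s Δ F') : F = F' := by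
  obtain ⟨m, x, hinj, hfacet, hshell⟩ := hsh
  obtain ⟨i, rfl⟩ := (hfacet F).mp (hF.isFacet hΔ (by omega) hFΔ hFs)
  obtain ⟨j, rfl⟩ := (hfacet F').mp (hF'.isFacet hΔ (by omega) hFΔ' hFs')
  have hmeet : (x i ∩ x j).Nonempty := by
    have hunion : #(x i ∪ x j) ≤ n := by simpa using card_le_univ (x i ∪ x j)
    have := card_union_add_card_inter (x i) (x j)
    exact card_pos.mp (by omega)
  have hlater {i j : Fin m} (hj : #(x j) = s) (hiso : IsIsolated s Δ (x j)) (hij : i < j)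
      (hmeet : (x i ∩ x j).Nonempty) : False := by
    obtain ⟨l, hlj, -, hcard⟩ := hshell i j hij hmeet
    have hl : IsFacet Δ (x l) := (hfacet _).mpr ⟨l, rfl⟩
    refine hiso.card_inter_add_one_ne hΔ hl.1 (fun hsub ↦ hlj.ne ?_) (by omega)
    exact hinj (hl.2 _ ((hfacet _).mpr ⟨j, rfl⟩).1 hsub).symm
  rcases lt_trichotomy i j with hij | rfl | hji
  · exact (hlater hFs' hF' hij hmeet).elim
  · rfl
  · exact (hlater hFs hF hji (inter_comm (x i) (x j) ▸ hmeet)).elim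

/-- The complex obtained from `Δ` by adding `F` and all its nonempty subsets. -/
def addSimplex (Δ : Finset (Finset (Fin n))) (F : Finset (Fin n)) : Finset (Finset (Fin n)) :=
  Δ ∪ F.powerset.erase ∅

lemma mem_addSimplex : y ∈ addSimplex Δ F ↔ y ∈ Δ ∨ y.Nonempty ∧ y ⊆ F := by
  rw [addSimplex, mem_union, mem_erase, mem_powerset, nonempty_iff_ne_empty]

lemma subset_addSimplex : Δ ⊆ addSimplex Δ F := subset_union_left

lemma isComplex_addSimplex (hΔ : IsComplex Δ) (F : Finset (Fin n)) :
    IsComplex (addSimplex Δ F) := by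
  refine ⟨fun x hx ↦ ?_, fun x hx y hy hyx ↦ mem_addSimplex.mpr ?_⟩
  · exact (mem_addSimplex.mp hx).elim (hΔ.1 x) And.left
  · exact (mem_addSimplex.mp hx).imp (fun hx ↦ hΔ.2 x hx y hy hyx) fun hx ↦ ⟨hy, hyx.trans hx.2⟩

/-- An `s`-set `F` whose `(s - 2)`-subsets are all faces of `Δ` and which meets no `s`-face of `Δ`
in more than `s - 2` vertices. Adding `F` to `Δ` makes it an isolated facet. -/
structure IsSwitchable (s : ℕ) (Δ : Finset (Finset (Fin n))) (F : Finset (Fin n)) : Prop where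
  card_eq : #F = s
  mem_of_subset : ∀ y ⊆ F, #y + 2 = s → y ∈ Δ
  card_inter_le : ∀ G ∈ Δ, #G = s → #(G ∩ F) + 2 ≤ s

lemma IsSwitchable.notMem (hF : IsSwitchable s Δ F) : F ∉ Δ := by
  intro hFΔ
  have hle := hF.card_inter_le F hFΔ hF.card_eq
  rw [inter_self, hF.card_eq] at hle
  omega

lemma IsSwitchable.isIsolated_addSimplex (hF : IsSwitchable s Δ F) :
    IsIsolated s (addSimplex Δ F) F := by
  intro G hG hGs hne
  rcases mem_addSimplex.mp hG with hG | ⟨-, hGF⟩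
  · exact hF.card_inter_le G hG hGs
  · exact (hne (eq_of_subset_of_card_le hGF (hF.card_eq.trans hGs.symm).le)).elim

lemma IsSwitchable.mem_iff (hF : IsSwitchable s Δ F) (hΔ : IsComplex Δ) :
    y ∈ Δ ↔ y ∈ addSimplex Δ F ∧ ¬ y ⊆ F ∨ y ∈ {y ∈ Δ | y ⊆ F ∧ #y + 1 = s} ∨
      y ⊆ F ∧ y.Nonempty ∧ #y + 2 ≤ s := by
  rw [mem_filter]
  constructor
  · intro hy
    by_cases hyF : y ⊆ F
    · have hyF' : y ⊂ F := hyF.ssubset_of_ne fun h ↦ hF.notMem (h ▸ hy)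
      have hcard : #y < s := (card_lt_card hyF').trans_eq hF.card_eq
      rcases (Nat.succ_le_of_lt hcard).eq_or_lt with h | h
      · exact Or.inr (Or.inl ⟨hy, hyF, h⟩)
      · exact Or.inr (Or.inr ⟨hyF, hΔ.1 y hy, h⟩)
    · exact Or.inl ⟨subset_addSimplex hy, hyF⟩
  · rintro (⟨hy, hyF⟩ | ⟨hy, -⟩ | ⟨hyF, hne, hcard⟩)
    · exact (mem_addSimplex.mp hy).resolve_right fun h ↦ hyF h.2
    · exact hy
    · obtain ⟨z, hyz, hzF, hz⟩ := exists_subsuperset_card_eq hyF (n := s - 2) (by omega)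
        (by rw [hF.card_eq]; omega)
      exact hΔ.2 z (hF.mem_of_subset z hzF (by omega)) y hne hyz

/-- The simplices that can be added to `Δ` as isolated facets of size `s`. -/
def switchableSets (s : ℕ) (Δ : Finset (Finset (Fin n))) : Finset (Finset (Fin n)) :=
  {F | IsSwitchable s Δ F}

lemma mem_switchableSets : F ∈ switchableSets s Δ ↔ IsSwitchable s Δ F := by
  simp [switchableSets]

lemma mem_allComplexes : Δ ∈ allComplexes n ↔ IsComplex Δ := by simp [allComplexes]

/-- A complex is recovered from the result of adding a given switchable `F` once it is known which
of the `s` maximal proper subsets of `F` are its faces. -/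
lemma card_addSimplex_fiber_le (hs : 0 < s) (Δ' : Finset (Finset (Fin n))) (F : Finset (Fin n)) :
    #{Δ ∈ allComplexes n | IsSwitchable s Δ F ∧ addSimplex Δ F = Δ'} ≤ 2 ^ s := by
  by_cases hFs : #F = s
  · have hcard : #(F.powersetCard (s - 1)).powerset = 2 ^ s := by
      rw [card_powerset, card_powersetCard, hFs,
        Nat.choose_symm_of_eq_add (Nat.sub_add_cancel hs).symm, Nat.choose_one_right]
    rw [← hcard]
    refine card_le_card_of_injOn (fun Δ ↦ {y ∈ Δ | y ⊆ F ∧ #y + 1 = s}) (fun Δ _ ↦ ?_)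
      fun Δ₁ h₁ Δ₂ h₂ heq ↦ ?_
    · refine mem_powerset.mpr fun y hy ↦ mem_powersetCard.mpr ?_
      obtain ⟨-, hyF, hcard⟩ := mem_filter.mp hy
      exact ⟨hyF, by omega⟩
    · obtain ⟨hΔ₁, hF₁, rfl⟩ := mem_filter.mp h₁
      obtain ⟨hΔ₂, hF₂, hadd⟩ := mem_filter.mp h₂
      beta_reduce at heq
      ext y
      rw [hF₁.mem_iff (mem_allComplexes.mp hΔ₁), hF₂.mem_iff (mem_allComplexes.mp hΔ₂), hadd, heq]
  · rw [filter_false_of_mem fun Δ _ h ↦ hFs h.1.card_eq]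
    simp

/-- If three simplices could lead to `Δ'`, the complex that lacks the first would already have the
other two as isolated facets. -/
lemma card_switchable_origins_le_two (hs : n < 2 * s) (Δ' : Finset (Finset (Fin n))) :
    #{F | ∃ Δ, IsComplex Δ ∧ Shellable Δ ∧ IsSwitchable s Δ F ∧ addSimplex Δ F = Δ'} ≤ 2 := by
  by_contra! hcard
  obtain ⟨F₁, hF₁, F₂, hF₂, F₃, hF₃, hne₁₂, hne₁₃, hne₂₃⟩ := two_lt_card.mp hcard
  obtain ⟨Δ₁, hΔ₁, hsh, hsw₁, rfl⟩ := mem_filter_univ F₁ |>.mp hF₁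
  have hother {F : Finset (Fin n)} (hne : F₁ ≠ F)
      (hF : ∃ Δ, IsComplex Δ ∧ Shellable Δ ∧ IsSwitchable s Δ F ∧
        addSimplex Δ F = addSimplex Δ₁ F₁) : F ∈ Δ₁ ∧ #F = s ∧ IsIsolated s Δ₁ F := by
    obtain ⟨Δ, -, -, hsw, hadd⟩ := hF
    refine ⟨?_, hsw.card_eq, fun G hG ↦ (hadd ▸ hsw.isIsolated_addSimplex) G (subset_addSimplex hG)⟩
    have hmem : F ∈ addSimplex Δ₁ F₁ :=
      hadd ▸ mem_addSimplex.mpr (Or.inr ⟨card_pos.mp (by rw [hsw.card_eq]; omega), subset_rfl⟩)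
    refine (mem_addSimplex.mp hmem).resolve_right fun h ↦ hne.symm ?_
    exact eq_of_subset_of_card_le h.2 (by rw [hsw₁.card_eq, hsw.card_eq])
  obtain ⟨hmem₂, hcard₂, hiso₂⟩ := hother hne₁₂ (mem_filter_univ F₂ |>.mp hF₂)
  obtain ⟨hmem₃, hcard₃, hiso₃⟩ := hother hne₁₃ (mem_filter_univ F₃ |>.mp hF₃)
  exact hne₂₃ (eq_of_isIsolated_of_shellable hsh hΔ₁ hs hmem₂ hcard₂ hiso₂ hmem₃ hcard₃ hiso₃)

lemma card_filter_shellable_le_mul (hs : n < 2 * s) (B : ℕ) :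
    #{Δ ∈ allComplexes n | Shellable Δ ∧ B ≤ #(switchableSets s Δ)} * B ≤
      2 ^ s * 2 * #(allComplexes n) := by
  set 𝒮 := {Δ ∈ allComplexes n | Shellable Δ ∧ B ≤ #(switchableSets s Δ)}
  set pairs := 𝒮.sigma (switchableSets s)
  have mem_pairs {p} (hp : p ∈ pairs) : p.1 ∈ allComplexes n ∧ Shellable p.1 ∧
      IsSwitchable s p.1 p.2 := by
    obtain ⟨hΔ, hF⟩ := mem_sigma.mp hp
    exact ⟨(mem_filter.mp hΔ).1, (mem_filter.mp hΔ).2.1, mem_switchableSets.mp hF⟩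
  have hpairs : #𝒮 * B ≤ #pairs := by
    rw [card_sigma, ← smul_eq_mul]
    exact card_nsmul_le_sum _ _ _ fun Δ hΔ ↦ (mem_filter.mp hΔ).2.2
  refine hpairs.trans (card_le_mul_card_image_of_maps_to (f := fun p ↦ addSimplex p.1 p.2)
    (fun p hp ↦ ?_) _ fun Δ' _ ↦ ?_)
  · exact mem_allComplexes.mpr (isComplex_addSimplex (mem_allComplexes.mp (mem_pairs hp).1) p.2)
  refine (card_le_mul_card_image_of_maps_to (f := Sigma.snd) (fun p hp ↦ ?_) (2 ^ s)
    fun F _ ↦ ?_).trans (Nat.mul_le_mul_left _ (card_switchable_origins_le_two hs Δ'))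
  · obtain ⟨hp, hadd⟩ := mem_filter.mp hp
    obtain ⟨hΔ, hsh, hsw⟩ := mem_pairs hp
    exact (mem_filter_univ _).mpr ⟨p.1, mem_allComplexes.mp hΔ, hsh, hsw, hadd⟩
  · refine (card_le_card_of_injOn Sigma.fst (fun p hp ↦ ?_) fun p hp q hq hpq ↦ ?_).trans
      (card_addSimplex_fiber_le (by omega) Δ' F)
    · obtain ⟨hfiber, rfl⟩ := mem_filter.mp hp
      obtain ⟨hpair, hadd⟩ := mem_filter.mp hfiber
      exact mem_filter.mpr ⟨(mem_pairs hpair).1, (mem_pairs hpair).2.2, hadd⟩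
    · exact Sigma.ext hpq (heq_of_eq ((mem_filter.mp hp).2.trans (mem_filter.mp hq).2.symm))

end Switching

/-! ### Most lower sets have many switchable sets -/

section UpEdges

variable {α : Type*} [DecidableEq α]

lemma exists_eq_insert_erase {F G : Finset α} (hF : F.Nonempty) (hFG : #F = #G)
    (hinter : #F < #(G ∩ F) + 2) : ∃ v w, insert v (G.erase w) = F := by
  have hGF : #(G \ F) ≤ 1 := by
    have := card_sdiff_add_card_inter G F
    omega
  rcases (Nat.le_one_iff_eq_zero_or_eq_one.mp hGF) with hzero | hone
  · obtain rfl : G = F :=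
      eq_of_subset_of_card_le (sdiff_eq_empty_iff_subset.mp (card_eq_zero.mp hzero)) hFG.le
    obtain ⟨v, hv⟩ := hF
    exact ⟨v, v, insert_erase hv⟩
  · obtain ⟨w, hw⟩ := card_eq_one.mp hone
    obtain ⟨v, hv⟩ := card_eq_one.mp ((card_sdiff_comm hFG).trans hone)
    refine ⟨v, w, ?_⟩
    rw [← sdiff_singleton_eq_erase, ← hw, sdiff_sdiff_right_self, inf_eq_inter, inter_comm,
      insert_eq, ← hv, sdiff_union_inter]

variable [Fintype α] {j k : ℕ} {A G : Finset (Finset α)}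

/-- The edges `(x, v)` going up from a member `x` of `A` to `insert v x` in the Boolean lattice. -/
def upEdges (A : Finset (Finset α)) : Finset (Finset α × α) :=
  {p ∈ A ×ˢ univ | p.2 ∉ p.1}

lemma mem_upEdges {p : Finset α × α} : p ∈ upEdges A ↔ p.1 ∈ A ∧ p.2 ∉ p.1 := by
  simp [upEdges]

lemma card_upEdges (hA : (A : Set (Finset α)).Sized k) :
    #(upEdges A) = #A * (Fintype.card α - k) := by
  rw [upEdges, card_filter, sum_product, ← smul_eq_mul, ← sum_const]
  refine sum_congr rfl fun x hx ↦ ?_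
  rw [← card_filter, filter_notMem_eq_sdiff, ← compl_eq_univ_sdiff, card_compl, hA hx]

lemma card_filter_upEdges_insert_mem_le (K B : Finset (Finset α)) :
    #{p ∈ upEdges K | insert p.2 p.1 ∈ B} ≤ Fintype.card α * #B := by
  refine card_le_mul_card_image_of_maps_to (f := fun p : Finset α × α ↦ insert p.2 p.1)
    (fun p hp ↦ (mem_filter.mp hp).2) _ fun F _ ↦ ?_
  refine card_le_card_of_injOn Prod.snd (fun _ _ ↦ mem_univ _) fun p hp q hq hpq ↦ ?_
  obtain ⟨hpB, hpF⟩ := mem_filter.mp hp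
  obtain ⟨hqB, hqF⟩ := mem_filter.mp hq
  refine Prod.ext ?_ hpq
  rw [← erase_insert (mem_upEdges.mp (mem_filter.mp hpB).1).2, hpF, ← hqF, hpq,
    erase_insert (mem_upEdges.mp (mem_filter.mp hqB).1).2]

lemma succ_mul_card_completeSets_le (G : Finset (Finset α)) :
    (j + 1) * #(completeSets j G) ≤ #{p ∈ upEdges G | insert p.2 p.1 ∈ completeSets j G} := by
  refine mul_card_image_le_card_of_maps_to (f := fun p : Finset α × α ↦ insert p.2 p.1)
    (fun p hp ↦ (mem_filter.mp hp).2) _ fun x hx ↦ ?_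
  obtain ⟨hcard, hsub⟩ := mem_completeSets.mp hx
  rw [← hcard]
  refine card_le_card_of_injOn (fun v ↦ (x.erase v, v)) (fun v hv ↦ ?_)
    fun _ _ _ _ h ↦ (Prod.ext_iff.mp h).2
  have hmem : x.erase v ∈ G := hsub _ (erase_subset v x) (by rw [card_erase_of_mem hv]; omega)
  have hins : insert v (x.erase v) = x := insert_erase hv
  simp only [coe_filter, mem_filter, mem_upEdges, Set.mem_ofPred_eq, hins]
  exact ⟨⟨⟨hmem, notMem_erase v x⟩, hx⟩, trivial⟩

/-- An edge `(x, v)` leading out of `completeSets (j + 1) (completeSets j G)` contains an edge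
`(x.erase w, v)` leading out of `completeSets j G`. -/
lemma card_filter_upEdges_completeSets_le (G : Finset (Finset α)) :
    #{p ∈ upEdges (completeSets j G) |
        insert p.2 p.1 ∉ completeSets (j + 1) (completeSets j G)} ≤
      #{p ∈ upEdges G | insert p.2 p.1 ∉ completeSets j G} * Fintype.card α := by
  rw [← card_univ (α := α), ← card_product]
  refine (card_le_card ?_).trans (card_image_le (f := fun q ↦ (insert q.2 q.1.1, q.1.2)))
  rintro ⟨x, v⟩ hxv
  obtain ⟨hedge, hout⟩ := mem_filter.mp hxv
  obtain ⟨hx, hvx⟩ : x ∈ completeSets j G ∧ v ∉ x := mem_upEdges.mp hedge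
  obtain ⟨hxcard, hxG⟩ := mem_completeSets.mp hx
  obtain ⟨y, hyx, hycard, hy⟩ : ∃ y ⊆ insert v x, #y = j + 1 ∧ y ∉ completeSets j G := by
    by_contra! hall
    exact hout (mem_completeSets.mpr ⟨by rw [card_insert_of_notMem hvx, hxcard], hall⟩)
  have hvy : v ∈ y := by
    by_contra hvy
    have hyx' : y ⊆ x := (subset_insert_iff_of_notMem hvy).mp hyx
    exact hy (eq_of_subset_of_card_le hyx' (by omega) ▸ hx)
  have hsub : y.erase v ⊆ x := subset_insert_iff.mp hyx
  have hcard : #(y.erase v) = j := by rw [card_erase_of_mem hvy, hycard, Nat.add_sub_cancel]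
  obtain ⟨w, hwx, hwy⟩ := exists_mem_notMem_of_card_lt_card (s := y.erase v) (t := x) (by omega)
  refine mem_image.mpr ⟨((y.erase v, v), w), mem_product.mpr ⟨mem_filter.mpr ⟨?_, ?_⟩, mem_univ w⟩,
    Prod.ext ?_ rfl⟩
  · exact mem_upEdges.mpr ⟨hxG _ hsub hcard, notMem_erase v y⟩
  · rwa [insert_erase hvy]
  · exact eq_of_subset_of_card_le (insert_subset hwx hsub)
      (by rw [card_insert_of_notMem hwy, hcard, hxcard])

lemma card_completeSets_mul_le (hG : (G : Set (Finset α)).Sized j) :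
    #(completeSets j G) * (Fintype.card α - (j + 1)) ≤
      Fintype.card α * #(completeSets (j + 1) (completeSets j G)) +
        (#G * (Fintype.card α - j) - (j + 1) * #(completeSets j G)) * Fintype.card α := by
  rw [← card_upEdges sized_completeSets, ← card_upEdges hG, ← card_filter_add_card_filter_not
    (s := upEdges (completeSets j G))
    (fun p ↦ insert p.2 p.1 ∈ completeSets (j + 1) (completeSets j G))]
  refine Nat.add_le_add (card_filter_upEdges_insert_mem_le _ _)
    ((card_filter_upEdges_completeSets_le G).trans (Nat.mul_le_mul_right _ ?_))
  have hsplit := card_filter_add_card_filter_not (s := upEdges G)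
    (fun p ↦ insert p.2 p.1 ∈ completeSets j G)
  have hle := succ_mul_card_completeSets_le (j := j) G
  omega

end UpEdges

section ManySwitchable

variable {n j s t : ℕ} {A V : Finset (Finset (Fin n))}

lemma card_shadow_le_four_mul_card_completeSets (hn : n = 2 * j + 1) (hj : 10 ≤ j)
    (hA : (A : Set (Finset (Fin n))).Sized (j + 1)) (hdef : ¬ IsDeficient j A) :
    #(∂ A) ≤ 4 * #(completeSets (j + 1) (completeSets j (∂ A))) := by
  have hcount := card_completeSets_mul_le (j := j) hA.shadow
  obtain ⟨b, hb⟩ := Nat.exists_eq_add_of_le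
    (card_completeSets_le (α := Fin n) (j := j) (by rw [Fintype.card_fin]; omega) (∂ A))
  rw [IsDeficient, hb, Nat.add_sub_cancel_left, not_le] at hdef
  rw [Fintype.card_fin, hb, show n - (j + 1) = j by omega, show n - j = j + 1 by omega,
    add_mul, mul_comm (j + 1), Nat.add_sub_cancel_left] at hcount
  rw [hb]
  set a := #(completeSets j (∂ A))
  set u := #(completeSets (j + 1) (completeSets j (∂ A)))
  have hb₁ : 5 * b * j ≤ a + b := by
    refine le_trans ?_ hdef.le
    rw [hn]
    nlinarith
  have hb₂ : (5 * n * b) * (j + 1) ≤ (a + b) * (j + 1) := Nat.mul_le_mul_right _ hdef.le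
  have hu : (a + b) * (4 * j) ≤ 5 * (u * n) + 2 * (a + b) := by nlinarith
  rw [hn] at hu
  have hlarge : (a + b) * 10 ≤ (a + b) * j := Nat.mul_le_mul_left _ hj
  by_contra! hlt
  have := Nat.mul_le_mul_right (2 * j + 1) (Nat.succ_le_of_lt hlt)
  nlinarith

/-- The `s`-sets whose `(s - 2)`-subsets all lie in `V`. -/
def fullSets (s : ℕ) (V : Finset (Finset (Fin n))) : Finset (Finset (Fin n)) :=
  {F | #F = s ∧ ∀ y ⊆ F, #y + 2 = s → y ∈ V}

lemma mem_fullSets {F : Finset (Fin n)} :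
    F ∈ fullSets s V ↔ #F = s ∧ ∀ y ⊆ F, #y + 2 = s → y ∈ V := by
  simp [fullSets]

lemma completeSets_completeSets_shadow_subset_fullSets
    (hV : IsLowerSet (V : Set (Finset (Fin n)))) :
    completeSets (j + 1) (completeSets j (∂ (V # (j + 1)))) ⊆ fullSets (j + 2) V := by
  intro F hF
  obtain ⟨hcard, hsub⟩ := mem_completeSets.mp hF
  refine mem_fullSets.mpr ⟨hcard, fun y hyF hy ↦ ?_⟩
  obtain ⟨x, hyx, hxF, hx⟩ := exists_subsuperset_card_eq hyF (n := j + 1) (by omega) (by omega)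
  have hyV := (mem_completeSets.mp (hsub x hxF hx)).2 y hyx (by omega)
  obtain ⟨z, hz, hyz, -⟩ := (mem_shadow_iff_of_sized (sized_slice (𝒜 := V))).mp hyV
  exact hV hyz (mem_slice.mp hz).1

lemma card_fullSets_le (hs : 0 < s) :
    #(fullSets s V) ≤ #(switchableSets s V) + #(V # s) * n ^ 2 := by
  have hprod : #(V # s) * n ^ 2 = #(V # s ×ˢ (univ : Finset (Fin n × Fin n))) := by
    rw [card_product, card_univ, Fintype.card_prod, Fintype.card_fin, sq]
  rw [hprod]
  refine (card_le_card (t := switchableSets s V ∪ (V # s ×ˢ univ).image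
    fun p ↦ insert p.2.1 (p.1.erase p.2.2)) fun F hF ↦ ?_).trans
    ((card_union_le _ _).trans (Nat.add_le_add_left card_image_le _))
  obtain ⟨hFs, hFV⟩ := mem_fullSets.mp hF
  by_cases hinter : ∀ G ∈ V, #G = s → #(G ∩ F) + 2 ≤ s
  · exact mem_union_left _ (mem_switchableSets.mpr ⟨hFs, hFV, hinter⟩)
  push Not at hinter
  obtain ⟨G, hG, hGs, hGF⟩ := hinter
  obtain ⟨v, w, hvw⟩ := exists_eq_insert_erase (card_pos.mp (hFs ▸ hs)) (hFs.trans hGs.symm)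
    (by omega)
  exact mem_union_right _ (mem_image.mpr
    ⟨(G, v, w), mem_product.mpr ⟨mem_slice.mpr ⟨hG, hGs⟩, mem_univ _⟩, hvw⟩)

lemma choose_le_card_fullSets_add (hst : s + t = n + 2) :
    n.choose s ≤ #(fullSets s V) + #((alexanderDual V) # t) * n ^ 2 := by
  have hprod : #((alexanderDual V) # t) * n ^ 2 =
      #((alexanderDual V) # t ×ˢ (univ : Finset (Fin n × Fin n))) := by
    rw [card_product, card_univ, Fintype.card_prod, Fintype.card_fin, sq]
  have hchoose : n.choose s = #(powersetCard s (univ : Finset (Fin n))) := by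
    rw [card_powersetCard, card_univ, Fintype.card_fin]
  rw [hprod, hchoose]
  refine (card_le_card (t := fullSets s V ∪ ((alexanderDual V) # t ×ˢ univ).image
    fun p ↦ {p.2.1, p.2.2} ∪ p.1ᶜ) fun F hF ↦ ?_).trans
    ((card_union_le _ _).trans (Nat.add_le_add_left card_image_le _))
  have hFs : #F = s := (mem_powersetCard.mp hF).2
  by_cases hfull : ∀ y ⊆ F, #y + 2 = s → y ∈ V
  · exact mem_union_left _ (mem_fullSets.mpr ⟨hFs, hfull⟩)
  push Not at hfull
  obtain ⟨y, hyF, hy, hyV⟩ := hfull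
  obtain ⟨v, w, -, hvw⟩ := card_eq_two.mp
    (by rw [card_sdiff_of_subset hyF]; omega : #(F \ y) = 2)
  refine mem_union_right _ (mem_image.mpr
    ⟨(yᶜ, v, w), mem_product.mpr ⟨mem_slice.mpr ⟨?_, ?_⟩, mem_univ _⟩, ?_⟩)
  · rwa [mem_alexanderDual, compl_compl]
  · rw [card_compl, Fintype.card_fin]
    omega
  · rw [compl_compl, ← hvw, sdiff_union_of_subset hyF]

lemma choose_le_card_switchableSets_add (hs : 0 < s) (hst : s + t = n + 2) :
    n.choose s ≤ #(switchableSets s V) + (#(V # s) + #((alexanderDual V) # t)) * n ^ 2 := by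
  have hfull := choose_le_card_fullSets_add (V := V) hst
  have hswitch := card_fullSets_le (V := V) hs
  linarith

end ManySwitchable

section MiddleLayer

variable {n m j t : ℕ} {V : Finset (Finset (Fin n))}

/-- The number of members of the largest layer of the subsets of `Fin n`. -/
def maxLayerCard (n : ℕ) : ℝ := n.choose (n / 2)

lemma two_pow_le_succ_mul_choose_half (n : ℕ) : 2 ^ n ≤ (n + 1) * n.choose (n / 2) :=
  calc
    2 ^ n = ∑ i ∈ range (n + 1), n.choose i := (Nat.sum_range_choose n).symm
    _ ≤ ∑ _i ∈ range (n + 1), n.choose (n / 2) := sum_le_sum fun i _ ↦ Nat.choose_le_middle i n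
    _ = (n + 1) * n.choose (n / 2) := by rw [sum_const, card_range, smul_eq_mul]

lemma IsLogScale.two_pow_mul_pow_le (h : IsLogScale n m) (ht : t + m ≤ n) :
    (2 : ℝ) ^ t * n ^ 48 ≤ maxLayerCard n := by
  have hmul : 2 ^ t * n ^ 48 * (n + 1) ≤ n.choose (n / 2) * (n + 1) :=
    calc
      2 ^ t * n ^ 48 * (n + 1) ≤ 2 ^ t * n ^ 48 * (n * n) :=
        Nat.mul_le_mul_left _ (by have := h.le_left; nlinarith)
      _ = 2 ^ t * n ^ 50 := by ring
      _ ≤ 2 ^ t * 2 ^ m := Nat.mul_le_mul_left _ h.pow_le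
      _ = 2 ^ (t + m) := (pow_add 2 t m).symm
      _ ≤ 2 ^ n := Nat.pow_le_pow_right two_pos ht
      _ ≤ n.choose (n / 2) * (n + 1) :=
        (two_pow_le_succ_mul_choose_half n).trans_eq (mul_comm _ _)
  rw [maxLayerCard]
  exact_mod_cast Nat.le_of_mul_le_mul_right hmul n.succ_pos

lemma IsLogScale.mul_le (h : IsLogScale n m) : 10 ^ 8 * m ≤ n := by
  have := h.mul_pow_le_real (k := 1) (by norm_num)
  rw [pow_one] at this
  exact_mod_cast this

lemma IsLogScale.pow_le_maxLayerCard (h : IsLogScale n m) : (n : ℝ) ^ 100 ≤ maxLayerCard n := by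
  have hm : 2 * m + m ≤ n := by have := h.mul_le; omega
  have hn : (1 : ℝ) ≤ n := by have := h.le_left_real; linarith
  calc
    (n : ℝ) ^ 100 = (n ^ 50) ^ 2 * 1 := by ring
    _ ≤ ((2 : ℝ) ^ m) ^ 2 * (n : ℝ) ^ 48 := by
      gcongr
      · exact h.pow_le_real
      · exact one_le_pow₀ hn
    _ = (2 : ℝ) ^ (2 * m) * (n : ℝ) ^ 48 := by ring
    _ ≤ maxLayerCard n := h.two_pow_mul_pow_le hm

lemma maxLayerCard_le_two_mul_choose (hn : 2 ≤ n) :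
    maxLayerCard n ≤ 2 * n.choose (n / 2 + 1) := by
  have hmul : n.choose (n / 2) * (n / 2) ≤ 2 * n.choose (n / 2 + 1) * (n / 2) :=
    calc
      n.choose (n / 2) * (n / 2) ≤ n.choose (n / 2) * (n - n / 2) :=
        Nat.mul_le_mul_left _ (by omega)
      _ = n.choose (n / 2 + 1) * (n / 2 + 1) := (Nat.choose_succ_right_eq n (n / 2)).symm
      _ ≤ n.choose (n / 2 + 1) * (2 * (n / 2)) := Nat.mul_le_mul_left _ (by omega)
      _ = 2 * n.choose (n / 2 + 1) * (n / 2) := by ring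
  rw [maxLayerCard]
  exact_mod_cast Nat.le_of_mul_le_mul_right hmul (by omega)

lemma cast_card_le_maxLayerCard {C : Finset (Finset (Fin n))}
    (hC : (C : Set (Finset (Fin n))).Sized j) : (#C : ℝ) ≤ maxLayerCard n := by
  have hle : #C ≤ n.choose j := by simpa using hC.card_le
  rw [maxLayerCard]
  exact_mod_cast hle.trans (Nat.choose_le_middle j n)

/-- The `(j + 1)`-sets of `V` have a deficient shadow that is not small compared with the largest
layer. -/
def HasDeficientLayer (j : ℕ) (V : Finset (Finset (Fin n))) : Prop :=
  IsLargeDeficient j (maxLayerCard n / n ^ 20) (V # (j + 1))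

lemma card_filter_hasDeficientLayer_le (h : IsLogScale n m) (hj : n ≤ 2 * j + 1) :
    (#{V ∈ lowerSets (Fin n) | HasDeficientLayer j V} : ℝ) ≤ 1 / n * #(lowerSets (Fin n)) := by
  have hn₀ := h.left_pos
  have hn := h.le_left_real
  have hN := h.pow_le_maxLayerCard
  have hN₀ : 0 < maxLayerCard n := lt_of_lt_of_le (by positivity) hN
  have hexp : maxLayerCard n / n ^ 40 - maxLayerCard n / n ^ 20 / n ^ 3 ≤ -(n : ℝ) := by
    have hsmall : (n : ℝ) ≤ maxLayerCard n / n ^ 40 := by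
      rw [le_div_iff₀ (by positivity), ← pow_succ']
      exact (pow_le_pow_right₀ (by linarith) (by norm_num)).trans hN
    have hlarge : 2 * (maxLayerCard n / n ^ 40) ≤ n ^ 17 * (maxLayerCard n / n ^ 40) := by
      gcongr
      exact (by linarith : (2 : ℝ) ≤ n).trans (le_self_pow₀ (by linarith) (by norm_num))
    have heq : maxLayerCard n / n ^ 20 / n ^ 3 = n ^ 17 * (maxLayerCard n / n ^ 40) := by
      field_simp
    linarith
  refine (card_filter_isLargeDeficient_le_mul_card_lowerSets h hj
    (layerBound_of_le_two_mul h hN (by omega)) (fun C hC ↦ ?_) ?_).trans ?_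
  · rw [div_mul_cancel₀ _ (by positivity)]
    exact cast_card_le_maxLayerCard hC
  · rw [le_div_iff₀ (by positivity), ← pow_add]
    exact (pow_le_pow_right₀ (by linarith) (by norm_num)).trans hN
  · gcongr
    calc
      (2 : ℝ) ^ (maxLayerCard n / n ^ 40 - maxLayerCard n / n ^ 20 / n ^ 3) ≤ 2 ^ (-(n : ℝ)) :=
        Real.rpow_le_rpow_of_exponent_le one_le_two hexp
      _ = 1 / 2 ^ n := by rw [Real.rpow_neg two_pos.le, Real.rpow_natCast, one_div]
      _ ≤ 1 / n := one_div_le_one_div_of_le hn₀ (by exact_mod_cast Nat.lt_two_pow_self.le)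

lemma card_slice_le_of_not_hasDeficientLayer (hj : n ≤ 2 * j) (hV : ¬ HasDeficientLayer j V) :
    (#(V # (j + 1)) : ℝ) ≤ maxLayerCard n / n ^ 20 := by
  have hshadow : (#(∂ (V # (j + 1))) : ℝ) < maxLayerCard n / n ^ 20 :=
    not_le.mp fun hle ↦ hV ⟨hle, isDeficient_of_le_two_mul hj sized_slice⟩
  have hle : (#(V # (j + 1)) : ℝ) ≤ #(∂ (V # (j + 1))) := by
    exact_mod_cast card_le_card_shadow (by rw [Fintype.card_fin]; omega) sized_slice
  linarith

lemma maxLayerCard_div_pow_le (hn : 10 ^ 8 ≤ n) {a b : ℕ} (hab : a < b) :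
    maxLayerCard n / n ^ b ≤ maxLayerCard n / n ^ a / 100 := by
  have hn' : (10 : ℝ) ^ 8 ≤ n := by exact_mod_cast hn
  have hN : 0 ≤ maxLayerCard n := Nat.cast_nonneg _
  rw [div_div]
  refine div_le_div_of_nonneg_left hN (by positivity) ?_
  calc
    (n : ℝ) ^ a * 100 ≤ n ^ a * n := by gcongr; linarith
    _ = n ^ (a + 1) := (pow_succ _ _).symm
    _ ≤ n ^ b := pow_le_pow_right₀ (by linarith) hab

lemma maxLayerCard_div_mul_sq (hn : 0 < n) (a : ℕ) :
    maxLayerCard n / n ^ (a + 2) * n ^ 2 = maxLayerCard n / n ^ a := by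
  have hn' : (0 : ℝ) < n := by exact_mod_cast hn
  field_simp
  ring

/-- If the layer just above the middle has a small shadow, then both `V` and its dual are small
there, so that most sets of that layer are switchable. -/
lemma le_card_switchableSets_of_card_shadow_lt (hn : 10 ^ 8 ≤ n)
    (hdual : ¬ HasDeficientLayer ((n + 1) / 2) (alexanderDual V))
    (hshadow : (#(∂ (V # (n / 2 + 1))) : ℝ) < maxLayerCard n / n ^ 10) :
    maxLayerCard n / n ^ 11 ≤ #(switchableSets (n / 2 + 1) V) := by
  have hslice : (#(V # (n / 2 + 1)) : ℝ) ≤ #(∂ (V # (n / 2 + 1))) := by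
    exact_mod_cast card_le_card_shadow (by rw [Fintype.card_fin]; omega) sized_slice
  have hslice' := card_slice_le_of_not_hasDeficientLayer (by omega) hdual
  have hcount : (n.choose (n / 2 + 1) : ℝ) ≤ #(switchableSets (n / 2 + 1) V) +
      (#(V # (n / 2 + 1)) + #((alexanderDual V) # ((n + 1) / 2 + 1))) * n ^ 2 := by
    exact_mod_cast choose_le_card_switchableSets_add (by omega) (by omega)
  have hmul : ((#(V # (n / 2 + 1)) : ℝ) + #((alexanderDual V) # ((n + 1) / 2 + 1))) * n ^ 2 ≤
      maxLayerCard n / n ^ 8 + maxLayerCard n / n ^ 18 := by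
    rw [← maxLayerCard_div_mul_sq (by omega) 8, ← maxLayerCard_div_mul_sq (by omega) 18, ← add_mul]
    gcongr
    linarith
  have hchoose := maxLayerCard_le_two_mul_choose (n := n) (by omega)
  have h₈ := maxLayerCard_div_pow_le hn (a := 0) (b := 8) (by norm_num)
  have h₁₁ := maxLayerCard_div_pow_le hn (a := 0) (b := 11) (by norm_num)
  have h₁₈ := maxLayerCard_div_pow_le hn (a := 0) (b := 18) (by norm_num)
  have hN : 0 ≤ maxLayerCard n := Nat.cast_nonneg _
  rw [pow_zero, div_one] at h₈ h₁₁ h₁₈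
  linarith

/-- If the layer just above the middle has a large shadow that is not deficient, then `n` is odd
and this shadow supports many full sets two layers higher. -/
lemma le_card_switchableSets_of_le_card_shadow (hn : 10 ^ 8 ≤ n)
    (hV : IsLowerSet (V : Set (Finset (Fin n)))) (hupper : ¬ HasDeficientLayer ((n + 1) / 2) V)
    (hlower : ¬ HasDeficientLayer (n / 2) V)
    (hshadow : maxLayerCard n / n ^ 10 ≤ #(∂ (V # (n / 2 + 1)))) :
    maxLayerCard n / n ^ 11 ≤ #(switchableSets (n / 2 + 2) V) := by
  have hN : 0 ≤ maxLayerCard n := Nat.cast_nonneg _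
  have h₂₀ := maxLayerCard_div_pow_le hn (a := 10) (b := 20) (by norm_num)
  have hdef : ¬ IsDeficient (n / 2) (V # (n / 2 + 1)) := fun hdef ↦
    hlower ⟨by linarith [show 0 ≤ maxLayerCard n / n ^ 10 by positivity], hdef⟩
  have hodd : n = 2 * (n / 2) + 1 := by
    by_contra hne
    exact hdef (isDeficient_of_le_two_mul (by omega) sized_slice)
  have hslice := card_slice_le_of_not_hasDeficientLayer (by omega) hupper
  rw [show (n + 1) / 2 = n / 2 + 1 by omega] at hslice
  have hcount : (#(∂ (V # (n / 2 + 1))) : ℝ) ≤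
      4 * (#(switchableSets (n / 2 + 2) V) + #(V # (n / 2 + 2)) * n ^ 2) := by
    exact_mod_cast (card_shadow_le_four_mul_card_completeSets hodd (by omega) sized_slice
      hdef).trans (Nat.mul_le_mul_left 4 ((card_le_card
        (completeSets_completeSets_shadow_subset_fullSets hV)).trans
          (card_fullSets_le (by omega))))
  have hmul : (#(V # (n / 2 + 2)) : ℝ) * n ^ 2 ≤ maxLayerCard n / n ^ 18 := by
    rw [← maxLayerCard_div_mul_sq (by omega) 18]
    gcongr
  have h₁₁ := maxLayerCard_div_pow_le hn (a := 10) (b := 11) (by norm_num)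
  have h₁₈ := maxLayerCard_div_pow_le hn (a := 10) (b := 18) (by norm_num)
  linarith [show 0 ≤ maxLayerCard n / n ^ 10 by positivity]

end MiddleLayer

/-! ### The probability of shellability -/

section Probability

variable {n m j s : ℕ} {Δ : Finset (Finset (Fin n))} {P Q : Finset (Finset (Fin n)) → Prop}

lemma card_allComplexes_pos (n : ℕ) : 0 < #(allComplexes n) :=
  card_pos.mpr ⟨∅, mem_allComplexes.mpr (by simp [IsComplex])⟩

lemma uniformProb_mono (h : ∀ Δ, IsComplex Δ → P Δ → Q Δ) : uniformProb n P ≤ uniformProb n Q := by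
  have hsub : (allComplexes n).filter P ⊆ (allComplexes n).filter Q := fun Δ hΔ ↦
    mem_filter.mpr ((mem_filter.mp hΔ).imp_right (h Δ (mem_allComplexes.mp (mem_filter.mp hΔ).1)))
  exact div_le_div_of_nonneg_right (by exact_mod_cast card_le_card hsub) (Nat.cast_nonneg _)

lemma uniformProb_or_le :
    uniformProb n (fun Δ ↦ P Δ ∨ Q Δ) ≤ uniformProb n P + uniformProb n Q := by
  have hsub : {Δ ∈ allComplexes n | P Δ ∨ Q Δ} ⊆
      (allComplexes n).filter P ∪ (allComplexes n).filter Q := (filter_or _ _ _).subset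
  rw [uniformProb, uniformProb, uniformProb, ← add_div]
  refine div_le_div_of_nonneg_right ?_ (Nat.cast_nonneg _)
  exact_mod_cast (card_le_card (by convert hsub)).trans (card_union_le _ _)

lemma isLowerSet_insert_empty (hΔ : IsComplex Δ) :
    IsLowerSet (insert ∅ Δ : Set (Finset (Fin n))) := by
  intro x y hyx hx
  rcases y.eq_empty_or_nonempty with rfl | hy
  · exact Set.mem_insert ∅ _
  refine Set.mem_insert_of_mem _ (hx.elim (fun hx ↦ ?_) fun hx ↦ hΔ.2 x hx y hy hyx)
  exact absurd (subset_empty.mp (hx ▸ hyx)) hy.ne_empty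

lemma isComplex_erase_empty {V : Finset (Finset (Fin n))}
    (hV : IsLowerSet (V : Set (Finset (Fin n)))) : IsComplex (V.erase ∅) :=
  ⟨fun _ hx ↦ nonempty_iff_ne_empty.mpr (mem_erase.mp hx).1, fun _ hx _ hy hyx ↦
    mem_erase.mpr ⟨hy.ne_empty, hV hyx (mem_erase.mp hx).2⟩⟩

lemma card_lowerSets_le (n : ℕ) : #(lowerSets (Fin n)) ≤ 2 * #(allComplexes n) := by
  have hsub : lowerSets (Fin n) ⊆ insert ∅ ((allComplexes n).image (insert ∅)) := by
    intro V hV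
    have hV := mem_lowerSets.mp hV
    rcases V.eq_empty_or_nonempty with rfl | ⟨x, hx⟩
    · exact mem_insert_self ∅ _
    · exact mem_insert_of_mem (mem_image.mpr ⟨V.erase ∅, mem_allComplexes.mpr
        (isComplex_erase_empty hV), insert_erase (hV (empty_subset x) hx)⟩)
  have hcard := ((card_le_card hsub).trans (card_insert_le _ _)).trans
    (Nat.add_le_add_right card_image_le 1)
  have := card_allComplexes_pos n
  omega

lemma card_filter_insert_empty_le (P : Finset (Finset (Fin n)) → Prop) :
    #{Δ ∈ allComplexes n | P (insert ∅ Δ)} ≤ #{V ∈ lowerSets (Fin n) | P V} := by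
  have empty_notMem {Δ : Finset (Finset (Fin n))} (hΔ : Δ ∈ allComplexes n) : ∅ ∉ Δ :=
    fun hmem ↦ not_nonempty_empty ((mem_allComplexes.mp hΔ).1 ∅ hmem)
  refine card_le_card_of_injOn (insert ∅) (fun Δ hΔ ↦ ?_) fun Δ hΔ Δ' hΔ' heq ↦ ?_
  · obtain ⟨hΔ, hP⟩ := mem_filter.mp hΔ
    refine mem_filter.mpr ⟨mem_lowerSets.mpr ?_, hP⟩
    rw [coe_insert]
    exact isLowerSet_insert_empty (mem_allComplexes.mp hΔ)
  · rw [← erase_insert (empty_notMem (mem_filter.mp hΔ).1), heq,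
      erase_insert (empty_notMem (mem_filter.mp hΔ').1)]

lemma uniformProb_insert_empty_le {ε : ℝ} (hε : 0 ≤ ε)
    (hP : (#{V ∈ lowerSets (Fin n) | P V} : ℝ) ≤ ε * #(lowerSets (Fin n))) :
    uniformProb n (fun Δ ↦ P (insert ∅ Δ)) ≤ 2 * ε := by
  have hpos : (0 : ℝ) < #(allComplexes n) := by exact_mod_cast card_allComplexes_pos n
  have hlower : (#(lowerSets (Fin n)) : ℝ) ≤ 2 * #(allComplexes n) := by
    exact_mod_cast card_lowerSets_le n
  rw [uniformProb, div_le_iff₀ hpos]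
  calc
    (#{Δ ∈ allComplexes n | P (insert ∅ Δ)} : ℝ) ≤ #{V ∈ lowerSets (Fin n) | P V} := by
      exact_mod_cast card_filter_insert_empty_le P
    _ ≤ ε * #(lowerSets (Fin n)) := hP
    _ ≤ ε * (2 * #(allComplexes n)) := by gcongr
    _ = 2 * ε * #(allComplexes n) := by ring

lemma uniformProb_hasDeficientLayer_le (h : IsLogScale n m) (hj : n ≤ 2 * j + 1) :
    uniformProb n (fun Δ ↦ HasDeficientLayer j (insert ∅ Δ)) ≤ 2 * (1 / n) :=
  uniformProb_insert_empty_le (by positivity) (card_filter_hasDeficientLayer_le h hj)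

lemma uniformProb_hasDeficientLayer_alexanderDual_le (h : IsLogScale n m) (hj : n ≤ 2 * j + 1) :
    uniformProb n (fun Δ ↦ HasDeficientLayer j (alexanderDual (insert ∅ Δ))) ≤ 2 * (1 / n) := by
  refine uniformProb_insert_empty_le (P := fun V ↦ HasDeficientLayer j (alexanderDual V))
    (by positivity) (le_trans ?_ (card_filter_hasDeficientLayer_le h hj))
  exact_mod_cast card_filter_alexanderDual_le (HasDeficientLayer j)

lemma switchableSets_insert_empty_subset (hs : 3 ≤ s) (Δ : Finset (Finset (Fin n))) :
    switchableSets s (insert ∅ Δ) ⊆ switchableSets s Δ := by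
  intro F hF
  obtain ⟨hcard, hmem, hinter⟩ := mem_switchableSets.mp hF
  refine mem_switchableSets.mpr
    ⟨hcard, fun y hyF hy ↦ ?_, fun G hG ↦ hinter G (mem_insert_of_mem hG)⟩
  refine mem_of_mem_insert_of_ne (hmem y hyF hy) ?_
  rintro rfl
  rw [card_empty] at hy
  omega

lemma uniformProb_shellable_and_mul_le (hs : n < 2 * s) (B : ℕ) :
    uniformProb n (fun Δ ↦ Shellable Δ ∧ B ≤ #(switchableSets s Δ)) * B ≤ 2 ^ s * 2 := by
  have hpos : (0 : ℝ) < #(allComplexes n) := by exact_mod_cast card_allComplexes_pos n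
  rw [uniformProb, div_mul_eq_mul_div, div_le_iff₀ hpos]
  norm_cast
  convert card_filter_shellable_le_mul hs B

lemma uniformProb_shellable_and_le (h : IsLogScale n m) (hs : n < 2 * s) (hs' : 2 * s ≤ n + 4) :
    uniformProb n (fun Δ ↦ Shellable Δ ∧ maxLayerCard n / n ^ 11 ≤ #(switchableSets s Δ)) ≤
      1 / n := by
  have hn₀ := h.left_pos
  have hn := h.le_left_real
  have hsm : s + 1 + m ≤ n := by have := h.mul_le; have := h.le_left; omega
  set B := ⌈maxLayerCard n / (n : ℝ) ^ 11⌉₊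
  have hB : (2 : ℝ) ^ s * 2 * n ≤ B := by
    refine le_trans ?_ (Nat.le_ceil _)
    rw [le_div_iff₀ (by positivity)]
    calc
      (2 : ℝ) ^ s * 2 * n * n ^ 11 = (2 : ℝ) ^ (s + 1) * (n : ℝ) ^ 12 := by ring
      _ ≤ (2 : ℝ) ^ (s + 1) * (n : ℝ) ^ 48 := by
        gcongr
        · linarith
        · norm_num
      _ ≤ maxLayerCard n := h.two_pow_mul_pow_le hsm
  have hB₀ : (0 : ℝ) < B := lt_of_lt_of_le (by positivity) hB
  calc
    _ ≤ uniformProb n (fun Δ ↦ Shellable Δ ∧ B ≤ #(switchableSets s Δ)) :=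
      uniformProb_mono fun _ _ ↦ And.imp_right Nat.ceil_le.mpr
    _ ≤ 2 ^ s * 2 / B := (le_div_iff₀ hB₀).mpr (uniformProb_shellable_and_mul_le hs B)
    _ ≤ 1 / n := (div_le_div_iff₀ hB₀ hn₀).mpr (by linarith)

lemma uniformProb_shellable_le (h : IsLogScale n m) : uniformProb n Shellable ≤ 8 / n := by
  let Many (s : ℕ) (Δ : Finset (Finset (Fin n))) : Prop :=
    maxLayerCard n / n ^ 11 ≤ #(switchableSets s Δ)
  have many_of_insert {s} (hs : 3 ≤ s) {Δ} (hΔ : Many s (insert ∅ Δ)) : Many s Δ :=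
    hΔ.trans (by exact_mod_cast card_le_card (switchableSets_insert_empty_subset hs Δ))
  have hn := h.le_left
  have hcover (Δ : Finset (Finset (Fin n))) (hΔ : IsComplex Δ) (hsh : Shellable Δ) :
      HasDeficientLayer (n / 2) (insert ∅ Δ) ∨ HasDeficientLayer ((n + 1) / 2) (insert ∅ Δ) ∨
      HasDeficientLayer ((n + 1) / 2) (alexanderDual (insert ∅ Δ)) ∨
      (Shellable Δ ∧ Many (n / 2 + 1) Δ) ∨ (Shellable Δ ∧ Many (n / 2 + 2) Δ) := by
    by_contra! hnot
    obtain ⟨hlower, hupper, hdual, hmany₁, hmany₂⟩ := hnot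
    rcases lt_or_ge (#(∂ ((insert ∅ Δ) # (n / 2 + 1))) : ℝ) (maxLayerCard n / n ^ 10) with hlt | hge
    · exact hmany₁ hsh (many_of_insert (by omega)
        (le_card_switchableSets_of_card_shadow_lt hn hdual hlt))
    · exact hmany₂ hsh (many_of_insert (by omega) (le_card_switchableSets_of_le_card_shadow hn
        (by simpa using isLowerSet_insert_empty hΔ) hupper hlower hge))
  calc
    uniformProb n Shellable ≤ _ := uniformProb_mono hcover
    _ ≤ 2 * (1 / n) + (2 * (1 / n) + (2 * (1 / n) + (1 / n + 1 / n))) := by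
      refine uniformProb_or_le.trans (add_le_add ?_ (uniformProb_or_le.trans (add_le_add ?_
        (uniformProb_or_le.trans (add_le_add ?_ (uniformProb_or_le.trans (add_le_add ?_ ?_)))))))
      · exact uniformProb_hasDeficientLayer_le h (by omega)
      · exact uniformProb_hasDeficientLayer_le h (by omega)
      · exact uniformProb_hasDeficientLayer_alexanderDual_le h (by omega)
      · exact uniformProb_shellable_and_le h (by omega) (by omega)
      · exact uniformProb_shellable_and_le h (by omega) (by omega)
    _ = 8 / n := by ring

lemma eventually_mul_succ_pow_le_two_pow (a k : ℕ) :
    ∀ᶠ l : ℕ in Filter.atTop, a * (l + 1) ^ k ≤ 2 ^ l := by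
  have hlim := (tendsto_pow_const_div_const_pow_of_one_lt k (one_lt_two (α := ℝ))).comp
    (Filter.tendsto_add_atTop_nat 1)
  have hpos : (0 : ℝ) < 1 / (2 * (a + 1)) := by positivity
  filter_upwards [hlim.eventually_lt_const hpos] with l hl
  rw [Function.comp_apply, div_lt_div_iff₀ (by positivity) (by positivity), pow_succ] at hl
  have hle : (a : ℝ) * ((l + 1 : ℕ) : ℝ) ^ k ≤ 2 ^ l := by
    have : (0 : ℝ) ≤ ((l + 1 : ℕ) : ℝ) ^ k := by positivity
    linarith
  exact_mod_cast hle

lemma eventually_exists_isLogScale : ∀ᶠ n : ℕ in Filter.atTop, ∃ m, IsLogScale n m := by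
  obtain ⟨L, hL⟩ := Filter.eventually_atTop.mp
    (eventually_mul_succ_pow_le_two_pow (10 ^ 8 * 50 ^ 6) 6)
  filter_upwards [Filter.eventually_ge_atTop (2 ^ L)] with n hn
  have hn₀ : n ≠ 0 := (Nat.two_pow_pos L |>.trans_le hn).ne'
  refine ⟨50 * (Nat.log 2 n + 1), ?_, ?_, by omega⟩
  · rw [mul_comm, pow_mul]
    exact Nat.pow_le_pow_left (Nat.lt_pow_succ_log_self one_lt_two n).le 50
  · calc
      10 ^ 8 * (50 * (Nat.log 2 n + 1)) ^ 6 = 10 ^ 8 * 50 ^ 6 * (Nat.log 2 n + 1) ^ 6 := by ring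
      _ ≤ 2 ^ Nat.log 2 n := hL _ (Nat.le_log_of_pow_le one_lt_two hn)
      _ ≤ n := Nat.pow_log_le_self 2 hn₀

end Probability

end UniformComplex

/-- For `Δ ~ U(n)`, with high probability `Δ` is not shellable. -/
theorem stmt14 :
    Filter.Tendsto (fun n : ℕ => uniformProb n (fun Δ => Shellable Δ))
      Filter.atTop (nhds 0) := by
  refine squeeze_zero' (.of_forall fun n ↦ ?_) ?_ (tendsto_const_div_atTop_nhds_zero_nat 8)
  · unfold uniformProb
    positivity
  · filter_upwards [UniformComplex.eventually_exists_isLogScale] with n ⟨m, hm⟩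
    exact UniformComplex.uniformProb_shellable_le hm
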